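/- Suppose the horizon satisfies N ≥ n and assumptions (A1)–(A5) hold. Then there exist V_max, J_eq^max > 0 and c_V ∈ (0,1) such that: for every x_t ∈ ℝⁿ at which the tracking MPC problem is feasible with V(x_t) ≤ V_max and J*_{eq,lin}(x_t) ≤ J_eq^max, if (x̄*, ū*, xˢ*, uˢ*, yˢ*) is an optimal solution of the tracking MPC problem at x_t and x_{t+n} denotes the state obtained by applying ū*₀, …, ū*_{n−1} to the nonlinear dynamics x_{k+1} = f(x_k, u_k) starting from x_t, and moreover J*_{eq,lin}(x_{t+n}) ≤ J_eq^max, then the tracking MPC problem is feasible at x_{t+n} and V(x_{t+n}) ≤ c_V · V(x_t). -/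

import Mathlib

open Matrix

noncomputable section

def en {k : ℕ} (x : Fin k → ℝ) : ℝ := Real.sqrt (∑ i, x i ^ 2)

def qn {k : ℕ} (P : Matrix (Fin k) (Fin k) ℝ) (x : Fin k → ℝ) : ℝ :=
  x ⬝ᵥ P.mulVec x

def jac {n q : ℕ} (g : (Fin n → ℝ) → Fin q → ℝ) (xt : Fin n → ℝ) :
    Matrix (Fin q) (Fin n) ℝ :=
  LinearMap.toMatrix' (fderiv ℝ g xt).toLinearMap

def fdyn {n m : ℕ} (f0 : (Fin n → ℝ) → Fin n → ℝ) (B : Matrix (Fin n) (Fin m) ℝ)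
    (x : Fin n → ℝ) (u : Fin m → ℝ) : Fin n → ℝ :=
  f0 x + B.mulVec u

def hout {n p m : ℕ} (h0 : (Fin n → ℝ) → Fin p → ℝ) (D : Matrix (Fin p) (Fin m) ℝ)
    (x : Fin n → ℝ) (u : Fin m → ℝ) : Fin p → ℝ :=
  h0 x + D.mulVec u

def flin {n m : ℕ} (f0 : (Fin n → ℝ) → Fin n → ℝ) (B : Matrix (Fin n) (Fin m) ℝ)
    (xt x : Fin n → ℝ) (u : Fin m → ℝ) : Fin n → ℝ :=
  (jac f0 xt).mulVec x + B.mulVec u + (f0 xt - (jac f0 xt).mulVec xt)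

def hlin {n p m : ℕ} (h0 : (Fin n → ℝ) → Fin p → ℝ) (D : Matrix (Fin p) (Fin m) ℝ)
    (xt x : Fin n → ℝ) (u : Fin m → ℝ) : Fin p → ℝ :=
  (jac h0 xt).mulVec x + D.mulVec u + (h0 xt - (jac h0 xt).mulVec xt)

def Zlin {n m : ℕ} (f0 : (Fin n → ℝ) → Fin n → ℝ) (B : Matrix (Fin n) (Fin m) ℝ)
    (Us : Set (Fin m → ℝ)) (xt : Fin n → ℝ) : Set ((Fin n → ℝ) × (Fin m → ℝ)) :=
  {z | z.2 ∈ Us ∧ z.1 = flin f0 B xt z.1 z.2}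

def Zs {n m : ℕ} (f0 : (Fin n → ℝ) → Fin n → ℝ) (B : Matrix (Fin n) (Fin m) ℝ)
    (Us : Set (Fin m → ℝ)) : Set ((Fin n → ℝ) × (Fin m → ℝ)) :=
  {z | z.2 ∈ Us ∧ z.1 = fdyn f0 B z.1 z.2}

def A2holds {n m p : ℕ} (f0 : (Fin n → ℝ) → Fin n → ℝ) (h0 : (Fin n → ℝ) → Fin p → ℝ)
    (B : Matrix (Fin n) (Fin m) ℝ) (D : Matrix (Fin p) (Fin m) ℝ) (σs : ℝ) : Prop :=
  ∀ (xt v : Fin n → ℝ) (w : Fin m → ℝ),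
    σs * Real.sqrt (en v ^ 2 + en w ^ 2) ≤
      Real.sqrt (en ((jac f0 xt).mulVec v - v + B.mulVec w) ^ 2 +
        en ((jac h0 xt).mulVec v + D.mulVec w) ^ 2)

def A3holds {n m : ℕ} (f0 : (Fin n → ℝ) → Fin n → ℝ) (B : Matrix (Fin n) (Fin m) ℝ)
    (μ : ℝ) : Prop :=
  ∀ (xt w : Fin n → ℝ),
    μ * en w ≤ Real.sqrt (∑ k ∈ Finset.range n, en ((jac f0 xt ^ k * B)ᵀ.mulVec w) ^ 2)

def A4holds {n : ℕ} (f0 : (Fin n → ℝ) → Fin n → ℝ) (σl : ℝ) : Prop :=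
  ∀ xt v : Fin n → ℝ, σl * en v ≤ en (v - (jac f0 xt).mulVec v)
def Jeqlin {n m p : ℕ} (f0 : (Fin n → ℝ) → Fin n → ℝ) (h0 : (Fin n → ℝ) → Fin p → ℝ)
    (B : Matrix (Fin n) (Fin m) ℝ) (D : Matrix (Fin p) (Fin m) ℝ)
    (Us : Set (Fin m → ℝ)) (S : Matrix (Fin p) (Fin p) ℝ) (yr : Fin p → ℝ)
    (xt : Fin n → ℝ) : ℝ :=
  sInf {c : ℝ | ∃ z ∈ Zlin f0 B Us xt, c = qn S (hlin h0 D xt z.1 z.2 - yr)}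

def MPCfeas {n m p : ℕ} (f0 : (Fin n → ℝ) → Fin n → ℝ) (h0 : (Fin n → ℝ) → Fin p → ℝ)
    (B : Matrix (Fin n) (Fin m) ℝ) (D : Matrix (Fin p) (Fin m) ℝ)
    (U Us : Set (Fin m → ℝ)) (N : ℕ) (xt : Fin n → ℝ)
    (xb : ℕ → Fin n → ℝ) (ub : ℕ → Fin m → ℝ)
    (xs : Fin n → ℝ) (us : Fin m → ℝ) (ys : Fin p → ℝ) : Prop :=
  (∀ k < N, xb (k + 1) = flin f0 B xt (xb k) (ub k)) ∧
  xb 0 = xt ∧ xb N = xs ∧ (∀ k < N, ub k ∈ U) ∧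
  (xs, us) ∈ Zlin f0 B Us xt ∧ ys = hlin h0 D xt xs us

def MPCcost {n m p : ℕ} (Q : Matrix (Fin n) (Fin n) ℝ) (R : Matrix (Fin m) (Fin m) ℝ)
    (S : Matrix (Fin p) (Fin p) ℝ) (yr : Fin p → ℝ) (N : ℕ)
    (xb : ℕ → Fin n → ℝ) (ub : ℕ → Fin m → ℝ)
    (xs : Fin n → ℝ) (us : Fin m → ℝ) (ys : Fin p → ℝ) : ℝ :=
  (∑ k ∈ Finset.range N, (qn Q (xb k - xs) + qn R (ub k - us))) + qn S (ys - yr)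

def Jstar {n m p : ℕ} (f0 : (Fin n → ℝ) → Fin n → ℝ) (h0 : (Fin n → ℝ) → Fin p → ℝ)
    (B : Matrix (Fin n) (Fin m) ℝ) (D : Matrix (Fin p) (Fin m) ℝ)
    (U Us : Set (Fin m → ℝ)) (Q : Matrix (Fin n) (Fin n) ℝ) (R : Matrix (Fin m) (Fin m) ℝ)
    (S : Matrix (Fin p) (Fin p) ℝ) (yr : Fin p → ℝ) (N : ℕ) (xt : Fin n → ℝ) : ℝ :=
  sInf {c : ℝ | ∃ xb ub xs us ys, MPCfeas f0 h0 B D U Us N xt xb ub xs us ys ∧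
    c = MPCcost Q R S yr N xb ub xs us ys}

def Vfun {n m p : ℕ} (f0 : (Fin n → ℝ) → Fin n → ℝ) (h0 : (Fin n → ℝ) → Fin p → ℝ)
    (B : Matrix (Fin n) (Fin m) ℝ) (D : Matrix (Fin p) (Fin m) ℝ)
    (U Us : Set (Fin m → ℝ)) (Q : Matrix (Fin n) (Fin n) ℝ) (R : Matrix (Fin m) (Fin m) ℝ)
    (S : Matrix (Fin p) (Fin p) ℝ) (yr : Fin p → ℝ) (N : ℕ) (xt : Fin n → ℝ) : ℝ :=
  Jstar f0 h0 B D U Us Q R S yr N xt - Jeqlin f0 h0 B D Us S yr xt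

def MPCfeasible {n m p : ℕ} (f0 : (Fin n → ℝ) → Fin n → ℝ) (h0 : (Fin n → ℝ) → Fin p → ℝ)
    (B : Matrix (Fin n) (Fin m) ℝ) (D : Matrix (Fin p) (Fin m) ℝ)
    (U Us : Set (Fin m → ℝ)) (N : ℕ) (xt : Fin n → ℝ) : Prop :=
  ∃ xb ub xs us ys, MPCfeas f0 h0 B D U Us N xt xb ub xs us ys

def MPCopt {n m p : ℕ} (f0 : (Fin n → ℝ) → Fin n → ℝ) (h0 : (Fin n → ℝ) → Fin p → ℝ)
    (B : Matrix (Fin n) (Fin m) ℝ) (D : Matrix (Fin p) (Fin m) ℝ)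
    (U Us : Set (Fin m → ℝ)) (Q : Matrix (Fin n) (Fin n) ℝ) (R : Matrix (Fin m) (Fin m) ℝ)
    (S : Matrix (Fin p) (Fin p) ℝ) (yr : Fin p → ℝ) (N : ℕ) (xt : Fin n → ℝ)
    (xb : ℕ → Fin n → ℝ) (ub : ℕ → Fin m → ℝ)
    (xs : Fin n → ℝ) (us : Fin m → ℝ) (ys : Fin p → ℝ) : Prop :=
  MPCfeas f0 h0 B D U Us N xt xb ub xs us ys ∧
  ∀ xb' ub' xs' us' ys', MPCfeas f0 h0 B D U Us N xt xb' ub' xs' us' ys' →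
    MPCcost Q R S yr N xb ub xs us ys ≤ MPCcost Q R S yr N xb' ub' xs' us' ys'

def rollout {n m : ℕ} (f0 : (Fin n → ℝ) → Fin n → ℝ) (B : Matrix (Fin n) (Fin m) ℝ)
    (x0 : Fin n → ℝ) (u : ℕ → Fin m → ℝ) : ℕ → Fin n → ℝ
  | 0 => x0
  | k + 1 => fdyn f0 B (rollout f0 B x0 u k) (u k)

/-!
Put `δ = √V(x_t)`. Optimality keeps the predicted states and inputs within `O(δ)` of the
artificial steady state `(xˢ, uˢ)`, so the nonlinear state deviates from the prediction by `O(δ²)`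
only. At the new linearization point `x_{t+n}` the pair `(xˢ, uˢ)` becomes a steady state
`(xᵖ, uˢ)` after a shift of `O(δ²)`, while quadratic growth of the output cost places the best
steady state within `O(δ)` of `xᵖ`. Moving from `xᵖ` towards it by a fraction `t` reduces the
steady cost gap by the factor `1 - t` up to `O((θ + δ²) δ²)`, where `θ²` bounds the output costs.
The shifted tail of the old solution misses this target by `O(δ² + t δ)`, which a deadbeat
correction repairs at a cost proportional to the square of the mismatch; and dropping the first
`n` steps removes a fixed fraction of the tracking cost, because the optimal tracking cost is
proportional to the squared initial deviation. Hence
`V(x_{t+n}) ≤ (1 - t + C (θ + δ² + t²)) V(x_t)`, and one chooses first `t`, then `θ` and `V_max`.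
-/

section EuclideanNorm

variable {k : ℕ}

theorem en_eq_norm_toLp (x : Fin k → ℝ) : en x = ‖WithLp.toLp 2 x‖ := by
  simp only [en, EuclideanSpace.norm_eq, Real.norm_eq_abs, sq_abs]

theorem en_nonneg (x : Fin k → ℝ) : 0 ≤ en x := Real.sqrt_nonneg _

theorem norm_le_en (x : Fin k → ℝ) : ‖x‖ ≤ en x :=
  en_eq_norm_toLp x ▸ (pi_norm_le_iff_of_nonneg (norm_nonneg _)).2 (PiLp.norm_apply_le _)

theorem en_le_sqrt_mul_norm (x : Fin k → ℝ) : en x ≤ √k * ‖x‖ := by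
  refine Real.sqrt_le_iff.2 ⟨by positivity, ?_⟩
  calc ∑ i, x i ^ 2 ≤ ∑ _i : Fin k, ‖x‖ ^ 2 :=
        Finset.sum_le_sum fun i _ => sq_le_sq.2 (by simpa using norm_le_pi_norm x i)
    _ = (√k * ‖x‖) ^ 2 := by simp [mul_pow]

end EuclideanNorm

section QuadraticForm

variable {k : ℕ} {P : Matrix (Fin k) (Fin k) ℝ}

theorem exists_abs_dotProduct_mulVec_le (P : Matrix (Fin k) (Fin k) ℝ) :
    ∃ H > 0, ∀ x y : Fin k → ℝ, |x ⬝ᵥ P *ᵥ y| ≤ H * ‖x‖ * ‖y‖ := by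
  let β : (Fin k → ℝ) →L[ℝ] (Fin k → ℝ) →L[ℝ] ℝ :=
    (Matrix.toLinearMap₂' ℝ P).toContinuousBilinearMap
  have hβ : ∀ x y, β x y = x ⬝ᵥ P *ᵥ y := Matrix.toLinearMap₂'_apply' P
  refine ⟨‖β‖ + 1, by positivity, fun x y => ?_⟩
  calc |x ⬝ᵥ P *ᵥ y| = ‖β x y‖ := by rw [hβ, Real.norm_eq_abs]
    _ ≤ ‖β‖ * ‖x‖ * ‖y‖ := β.le_opNorm₂ x y
    _ ≤ (‖β‖ + 1) * ‖x‖ * ‖y‖ := by gcongr; linarith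

theorem qn_zero (P : Matrix (Fin k) (Fin k) ℝ) : qn P 0 = 0 := by simp [qn]

theorem qn_smul (P : Matrix (Fin k) (Fin k) ℝ) (t : ℝ) (x : Fin k → ℝ) :
    qn P (t • x) = t ^ 2 * qn P x := by
  simp only [qn, Matrix.mulVec_smul, dotProduct_smul, smul_dotProduct, smul_eq_mul]
  ring

theorem qn_add (P : Matrix (Fin k) (Fin k) ℝ) (x y : Fin k → ℝ) :
    qn P (x + y) = qn P x + (x ⬝ᵥ P *ᵥ y + y ⬝ᵥ P *ᵥ x) + qn P y := by
  simp only [qn, Matrix.mulVec_add, dotProduct_add, add_dotProduct]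
  ring

theorem qn_add_smul_sub (P : Matrix (Fin k) (Fin k) ℝ) (t : ℝ) (x y : Fin k → ℝ) :
    qn P (x + t • (y - x)) = (1 - t) * qn P x + t * qn P y - t * (1 - t) * qn P (y - x) := by
  rw [qn_add, qn_smul]
  simp only [qn, Matrix.mulVec_smul, Matrix.mulVec_sub, dotProduct_smul, smul_dotProduct,
    dotProduct_sub, sub_dotProduct, smul_eq_mul]
  ring

theorem continuous_qn (P : Matrix (Fin k) (Fin k) ℝ) : Continuous (qn P) := by
  unfold qn
  fun_prop

theorem qn_nonneg (hP : P.PosDef) (x : Fin k → ℝ) : 0 ≤ qn P x :=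
  hP.posSemidef.dotProduct_mulVec_nonneg x

theorem qn_add_le (hP : P.PosDef) {κ : ℝ} (hκ : 0 < κ) (x y : Fin k → ℝ) :
    qn P (x + y) ≤ (1 + κ) * qn P x + (1 + κ⁻¹) * qn P y := by
  have hsq : 0 ≤ κ * qn P (x + (-κ⁻¹) • y) := mul_nonneg hκ.le (qn_nonneg hP _)
  have hexpand : κ * qn P (x + (-κ⁻¹) • y)
      = κ * qn P x - (x ⬝ᵥ P *ᵥ y + y ⬝ᵥ P *ᵥ x) + κ⁻¹ * qn P y := by
    rw [qn_add, qn_smul]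
    simp only [Matrix.mulVec_smul, dotProduct_smul, smul_dotProduct, smul_eq_mul]
    field_simp
    ring
  rw [qn_add]
  linarith

theorem exists_qn_le (P : Matrix (Fin k) (Fin k) ℝ) :
    ∃ H > 0, ∀ x : Fin k → ℝ, qn P x ≤ H * ‖x‖ ^ 2 := by
  obtain ⟨H, hH, hle⟩ := exists_abs_dotProduct_mulVec_le P
  exact ⟨H, hH, fun x => (le_abs_self _).trans ((hle x x).trans_eq (by ring))⟩

theorem exists_le_qn (hP : P.PosDef) : ∃ c > 0, ∀ x : Fin k → ℝ, c * ‖x‖ ^ 2 ≤ qn P x := by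
  obtain ⟨c, hc, hsphere⟩ := (isCompact_sphere (0 : Fin k → ℝ) 1).exists_forall_le'
    (continuous_qn P).continuousOn (a := 0) fun x hx =>
      hP.dotProduct_mulVec_pos (ne_zero_of_mem_unit_sphere ⟨x, hx⟩)
  refine ⟨c, hc, fun x => ?_⟩
  rcases eq_or_ne x 0 with rfl | hx
  · simp [qn_zero]
  have hx' : ‖x‖ ≠ 0 := norm_ne_zero_iff.2 hx
  have hunit := hsphere (‖x‖⁻¹ • x) (by simp [norm_smul, hx'])
  rw [qn_smul] at hunit
  calc c * ‖x‖ ^ 2 ≤ ‖x‖⁻¹ ^ 2 * qn P x * ‖x‖ ^ 2 := by gcongr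
    _ = qn P x := by field_simp

theorem exists_norm_le_of_qn_le_sq (hP : P.PosDef) :
    ∃ c > 0, ∀ (x : Fin k → ℝ) (s : ℝ), 0 ≤ s → qn P x ≤ s ^ 2 → ‖x‖ ≤ c * s := by
  obtain ⟨c, hc, hle⟩ := exists_le_qn hP
  refine ⟨(√c)⁻¹, by positivity, fun x s hs hx => ?_⟩
  rw [← div_eq_inv_mul, le_div_iff₀ (by positivity)]
  refine le_of_sq_le_sq ?_ hs
  rw [mul_pow, Real.sq_sqrt hc.le]
  linarith [hle x]

theorem exists_qn_perturb_le (hP : P.PosDef) :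
    ∃ H > 0, ∀ (x y : Fin k → ℝ) (θ : ℝ), 0 ≤ θ → qn P x ≤ θ ^ 2 →
      qn P y ≤ qn P x + H * (θ * ‖y - x‖ + ‖y - x‖ ^ 2) := by
  obtain ⟨H, hH, hbilin⟩ := exists_abs_dotProduct_mulVec_le P
  obtain ⟨c, hc, hnorm⟩ := exists_norm_le_of_qn_le_sq hP
  refine ⟨2 * H * c + H, by positivity, fun x y θ hθ hx => ?_⟩
  obtain ⟨d, rfl⟩ : ∃ d, y = x + d := ⟨y - x, by abel⟩
  have hxd := (le_abs_self _).trans (hbilin x d)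
  have hdx := (le_abs_self _).trans (hbilin d x)
  have hdd := (le_abs_self _).trans (hbilin d d)
  have hcross : H * ‖x‖ * ‖d‖ ≤ H * (c * θ) * ‖d‖ := by gcongr; exact hnorm x θ hθ hx
  calc qn P (x + d) = qn P x + (x ⬝ᵥ P *ᵥ d + d ⬝ᵥ P *ᵥ x) + d ⬝ᵥ P *ᵥ d := qn_add P x d
    _ ≤ qn P x + 2 * H * c * (θ * ‖d‖) + H * ‖d‖ ^ 2 := by linarith
    _ ≤ qn P x + 2 * H * c * (θ * ‖d‖ + ‖d‖ ^ 2) + H * (θ * ‖d‖ + ‖d‖ ^ 2) := by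
        gcongr <;> nlinarith [mul_nonneg hθ (norm_nonneg d), sq_nonneg ‖d‖]
    _ = qn P x + (2 * H * c + H) * (θ * ‖x + d - x‖ + ‖x + d - x‖ ^ 2) := by
        rw [add_sub_cancel_left]
        ring

end QuadraticForm

section Steering

theorem exists_apply_eq_of_mul_norm_le_norm_adjoint {𝕜 E F : Type*} [RCLike 𝕜]
    [NormedAddCommGroup E] [InnerProductSpace 𝕜 E] [FiniteDimensional 𝕜 E]
    [NormedAddCommGroup F] [InnerProductSpace 𝕜 F] [FiniteDimensional 𝕜 F]
    {T : E →ₗ[𝕜] F} {μ : ℝ} (hμ : 0 < μ) (hT : ∀ w, μ * ‖w‖ ≤ ‖T.adjoint w‖) (y : F) :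
    ∃ x, T x = y ∧ μ * ‖x‖ ≤ ‖y‖ := by
  have hsq : ∀ w, ‖T.adjoint w‖ ^ 2 ≤ ‖T (T.adjoint w)‖ * ‖w‖ := fun w => by
    rw [← inner_self_eq_norm_sq (𝕜 := 𝕜), LinearMap.adjoint_inner_right]
    exact re_inner_le_norm _ _
  have hinj : Function.Injective (T ∘ₗ T.adjoint) := by
    refine (injective_iff_map_eq_zero _).2 fun w hw => ?_
    have hle := hsq w
    rw [show T (T.adjoint w) = 0 from hw, norm_zero, zero_mul] at hle
    have hadj : ‖T.adjoint w‖ = 0 := by nlinarith [norm_nonneg (T.adjoint w)]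
    have := hT w
    rw [hadj] at this
    exact norm_le_zero_iff.1 (nonpos_of_mul_nonpos_right this hμ)
  obtain ⟨w, rfl⟩ := LinearMap.injective_iff_surjective.1 hinj y
  refine ⟨T.adjoint w, rfl, ?_⟩
  rcases (norm_nonneg (T.adjoint w)).eq_or_lt with h0 | hpos
  · rw [← h0, mul_zero]
    exact norm_nonneg _
  refine le_of_mul_le_mul_right ?_ hpos
  calc μ * ‖T.adjoint w‖ * ‖T.adjoint w‖ = μ * ‖T.adjoint w‖ ^ 2 := by ring
    _ ≤ μ * (‖T (T.adjoint w)‖ * ‖w‖) := by gcongr; exact hsq w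
    _ = ‖T (T.adjoint w)‖ * (μ * ‖w‖) := by ring
    _ ≤ ‖(T ∘ₗ T.adjoint) w‖ * ‖T.adjoint w‖ := by
        rw [LinearMap.comp_apply]
        gcongr
        exact hT w

variable {n m : ℕ} {A : Matrix (Fin n) (Fin n) ℝ} {B : Matrix (Fin n) (Fin m) ℝ} {μ : ℝ}

/-- The controllability matrix `[B, AB, …, A ^ (n - 1) B]`; the column `(k, j)` is the `j`-th
column of `A ^ k * B`. -/
def controllabilityMatrix (A : Matrix (Fin n) (Fin n) ℝ) (B : Matrix (Fin n) (Fin m) ℝ) :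
    Matrix (Fin n) (Fin n × Fin m) ℝ :=
  Matrix.of fun i kj => (A ^ (kj.1 : ℕ) * B) i kj.2

/-- `μ` is a lower bound for the smallest singular value of the controllability matrix, written
as in `A3holds`. -/
def ControllabilityMargin (A : Matrix (Fin n) (Fin n) ℝ) (B : Matrix (Fin n) (Fin m) ℝ)
    (μ : ℝ) : Prop :=
  ∀ w : Fin n → ℝ, μ * en w ≤ √(∑ k ∈ Finset.range n, en ((A ^ k * B)ᵀ *ᵥ w) ^ 2)

theorem controllabilityMatrix_mulVec (A : Matrix (Fin n) (Fin n) ℝ)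
    (B : Matrix (Fin n) (Fin m) ℝ) (v : Fin n × Fin m → ℝ) :
    controllabilityMatrix A B *ᵥ v = ∑ k : Fin n, (A ^ (k : ℕ) * B) *ᵥ fun j => v (k, j) := by
  ext i
  simp only [controllabilityMatrix, Matrix.mulVec, dotProduct, Matrix.of_apply, Finset.sum_apply,
    Fintype.sum_prod_type]

theorem ControllabilityMargin.mul_norm_le (h : ControllabilityMargin A B μ)
    (w : EuclideanSpace ℝ (Fin n)) :
    μ * ‖w‖ ≤ ‖(Matrix.toEuclideanLin (controllabilityMatrix A B)).adjoint w‖ := by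
  rw [← Matrix.toEuclideanLin_conjTranspose_eq_adjoint]
  refine (en_eq_norm_toLp w.ofLp ▸ h w.ofLp).trans_eq ?_
  rw [EuclideanSpace.norm_eq, Fintype.sum_prod_type, Finset.sum_range]
  congr 1
  refine Finset.sum_congr rfl fun k _ => ?_
  rw [en, Real.sq_sqrt (Finset.sum_nonneg fun i _ => sq_nonneg _)]
  refine Finset.sum_congr rfl fun j _ => ?_
  rw [Real.norm_eq_abs, sq_abs]
  rfl

theorem ControllabilityMargin.exists_steering (h : ControllabilityMargin A B μ) (hμ : 0 < μ)
    (y : Fin n → ℝ) :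
    ∃ v : Fin n → Fin m → ℝ, ∑ k : Fin n, (A ^ (k : ℕ) * B) *ᵥ v k = y ∧
      ∀ k, μ * ‖v k‖ ≤ en y := by
  obtain ⟨x, hx, hnorm⟩ := exists_apply_eq_of_mul_norm_le_norm_adjoint hμ
    h.mul_norm_le (WithLp.toLp 2 y)
  refine ⟨fun k j => x (k, j), ?_, fun k => ?_⟩
  · rw [← controllabilityMatrix_mulVec A B x.ofLp]
    exact congrArg WithLp.ofLp hx
  · rw [en_eq_norm_toLp]
    refine le_trans ?_ hnorm
    gcongr
    exact (pi_norm_le_iff_of_nonneg (norm_nonneg _)).2 fun j => PiLp.norm_apply_le x (k, j)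

end Steering

section DrivenOrbit

theorem le_one_add_pow_mul_of_guarded_step {a η ρ : ℝ} {N : ℕ} {z : ℕ → ℝ} (ha : 0 ≤ a)
    (hη : 0 ≤ η) (hρ : (1 + a) ^ N * η ≤ ρ) (h0 : z 0 ≤ η)
    (hstep : ∀ k < N, z k ≤ ρ → z (k + 1) ≤ a * z k + η) :
    ∀ k ≤ N, z k ≤ (1 + a) ^ k * η
  | 0, _ => by simpa using h0
  | k + 1, hk => by
    have ih := le_one_add_pow_mul_of_guarded_step ha hη hρ h0 hstep k (by omega)
    have hguard : z k ≤ ρ := by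
      refine ih.trans (le_trans ?_ hρ)
      gcongr
      · linarith
      · omega
    calc z (k + 1) ≤ a * z k + η := hstep k (by omega) hguard
      _ ≤ a * ((1 + a) ^ k * η) + (1 + a) ^ k * η := by
          gcongr
          exact le_mul_of_one_le_left hη (one_le_pow₀ (by linarith))
      _ = (1 + a) ^ (k + 1) * η := by ring

/-- The trajectory `e (k + 1) = A (e k) + w k`, `e 0 = e₀`, of a linear recursion driven by
the sequence `w`. -/
def drivenOrbit {R E : Type*} [Semiring R] [AddCommMonoid E] [Module R E] (A : E →ₗ[R] E)
    (e₀ : E) (w : ℕ → E) : ℕ → E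
  | 0 => e₀
  | k + 1 => A (drivenOrbit A e₀ w k) + w k

section Module

variable {R E : Type*} [Semiring R] [AddCommMonoid E] [Module R E] (A : E →ₗ[R] E)

theorem drivenOrbit_add (e₀ e₁ : E) (w v : ℕ → E) (k : ℕ) :
    drivenOrbit A (e₀ + e₁) (w + v) k = drivenOrbit A e₀ w k + drivenOrbit A e₁ v k := by
  induction k with
  | zero => rfl
  | succ k ih =>
    simp only [drivenOrbit, ih, map_add, Pi.add_apply]
    abel

theorem drivenOrbit_zero_left (w : ℕ → E) (k : ℕ) :
    drivenOrbit A 0 w k = ∑ j ∈ Finset.range k, (A ^ j) (w (k - 1 - j)) := by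
  induction k with
  | zero => rfl
  | succ k ih =>
    rw [drivenOrbit, ih, Finset.sum_range_succ', map_sum]
    congr 1
    refine Finset.sum_congr rfl fun j _ => ?_
    rw [pow_succ', Module.End.mul_apply]
    congr 3
    omega

end Module

theorem norm_drivenOrbit_le {𝕜 E : Type*} [NormedField 𝕜] [NormedAddCommGroup E]
    [NormedSpace 𝕜 E] {A : E →ₗ[𝕜] E} {a η : ℝ} {e₀ : E} {w : ℕ → E} (ha : 0 ≤ a)
    (hA : ∀ v, ‖A v‖ ≤ a * ‖v‖) (he₀ : ‖e₀‖ ≤ η) (hw : ∀ k, ‖w k‖ ≤ η) (k : ℕ) :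
    ‖drivenOrbit A e₀ w k‖ ≤ (1 + a) ^ k * η :=
  le_one_add_pow_mul_of_guarded_step (z := fun k => ‖drivenOrbit A e₀ w k‖) ha
    ((norm_nonneg _).trans he₀) le_rfl he₀
    (fun j _ _ => (norm_add_le _ _).trans (add_le_add (hA _) (hw j))) k le_rfl

end DrivenOrbit

section Deadbeat

variable {n m N : ℕ} {A : Matrix (Fin n) (Fin n) ℝ} {B : Matrix (Fin n) (Fin m) ℝ} {μ : ℝ}

theorem ControllabilityMargin.exists_drivenOrbit_eq (h : ControllabilityMargin A B μ)
    (hμ : 0 < μ) (hN : n ≤ N) (y : Fin n → ℝ) :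
    ∃ c : ℕ → Fin m → ℝ, drivenOrbit A.mulVecLin 0 (fun k => B *ᵥ c k) N = y ∧
      ∀ k, μ * ‖c k‖ ≤ en y := by
  obtain ⟨v, hv, hnorm⟩ := h.exists_steering hμ y
  let c' : ℕ → Fin m → ℝ := fun j => if hj : j < n then v ⟨j, hj⟩ else 0
  refine ⟨fun k => c' (N - 1 - k), ?_, fun k => ?_⟩
  · calc drivenOrbit A.mulVecLin 0 (fun k => B *ᵥ c' (N - 1 - k)) N
        = ∑ j ∈ Finset.range N, (A ^ j * B) *ᵥ c' j := by
          rw [drivenOrbit_zero_left]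
          refine Finset.sum_congr rfl fun j hj => ?_
          have : N - 1 - (N - 1 - j) = j := by have := Finset.mem_range.1 hj; omega
          rw [this, ← Matrix.toLin'_apply', ← Matrix.toLin'_pow, Matrix.toLin'_apply,
            Matrix.mulVec_mulVec]
      _ = ∑ j ∈ Finset.range n, (A ^ j * B) *ᵥ c' j := by
          refine (Finset.sum_subset (Finset.range_mono hN) fun j _ hj => ?_).symm
          simp only [c', dif_neg (Finset.mem_range.not.1 hj), Matrix.mulVec_zero]
      _ = ∑ j : Fin n, (A ^ (j : ℕ) * B) *ᵥ v j := by
          rw [Finset.sum_range]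
          simp only [c', Fin.is_lt, dif_pos]
      _ = y := hv
  · by_cases hk : N - 1 - k < n
    · simpa only [c', dif_pos hk] using hnorm _
    · simpa only [c', dif_neg hk, norm_zero, mul_zero] using en_nonneg y

theorem exists_deadbeat_bound (B : Matrix (Fin n) (Fin m) ℝ) (hN : n ≤ N) (hμ : 0 < μ)
    {a : ℝ} (ha : 0 ≤ a) :
    ∃ K > 0, ∀ A : Matrix (Fin n) (Fin n) ℝ, (∀ v, ‖A *ᵥ v‖ ≤ a * ‖v‖) →
      ControllabilityMargin A B μ → ∀ (e₀ : Fin n → ℝ) (w : ℕ → Fin n → ℝ) (η : ℝ),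
      ‖e₀‖ ≤ η → (∀ k, ‖w k‖ ≤ η) → ∃ c : ℕ → Fin m → ℝ,
        drivenOrbit A.mulVecLin e₀ (fun k => B *ᵥ c k + w k) N = 0 ∧
        (∀ k ≤ N, ‖drivenOrbit A.mulVecLin e₀ (fun k => B *ᵥ c k + w k) k‖ ≤ K * η) ∧
        ∀ k, ‖c k‖ ≤ K * η := by
  let B' := LinearMap.toContinuousLinearMap B.mulVecLin
  set K₁ : ℝ := μ⁻¹ * (√n * (1 + a) ^ N) with hK₁
  set K₂ : ℝ := (1 + a) ^ N * (‖B'‖ * K₁ + 1)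
  refine ⟨K₁ + K₂, by positivity, fun A hA hctrl e₀ w η he₀ hw => ?_⟩
  have hη : 0 ≤ η := (norm_nonneg _).trans he₀
  have hfree := norm_drivenOrbit_le (A := A.mulVecLin) ha hA he₀ hw N
  obtain ⟨c, hcN, hc⟩ := hctrl.exists_drivenOrbit_eq hμ hN (-drivenOrbit A.mulVecLin e₀ w N)
  have hcK : ∀ k, ‖c k‖ ≤ K₁ * η := fun k => by
    rw [hK₁, mul_assoc, ← div_eq_inv_mul, le_div_iff₀ hμ, mul_comm]
    calc μ * ‖c k‖ ≤ √n * ‖drivenOrbit A.mulVecLin e₀ w N‖ :=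
          norm_neg (drivenOrbit A.mulVecLin e₀ w N) ▸ (hc k).trans (en_le_sqrt_mul_norm _)
      _ ≤ √n * (1 + a) ^ N * η := by rw [mul_assoc]; gcongr
  have hinput : ∀ k, ‖B *ᵥ c k + w k‖ ≤ (‖B'‖ * K₁ + 1) * η := fun k => calc
    ‖B *ᵥ c k + w k‖ ≤ ‖B' (c k)‖ + ‖w k‖ := norm_add_le _ _
    _ ≤ ‖B'‖ * (K₁ * η) + η := add_le_add (B'.le_opNorm_of_le (hcK k)) (hw k)
    _ = (‖B'‖ * K₁ + 1) * η := by ring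
  have hstart : ‖e₀‖ ≤ (‖B'‖ * K₁ + 1) * η :=
    he₀.trans (le_mul_of_one_le_left hη (le_add_of_nonneg_left (by positivity)))
  refine ⟨c, ?_, fun k hk => ?_, fun k => (hcK k).trans ?_⟩
  · have := drivenOrbit_add A.mulVecLin 0 e₀ (fun k => B *ᵥ c k) w N
    rwa [zero_add, hcN, neg_add_cancel] at this
  · refine (norm_drivenOrbit_le ha hA hstart hinput k).trans ?_
    calc (1 + a) ^ k * ((‖B'‖ * K₁ + 1) * η) ≤ (1 + a) ^ N * ((‖B'‖ * K₁ + 1) * η) := by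
          gcongr
          linarith
      _ = K₂ * η := by ring
      _ ≤ (K₁ + K₂) * η := by gcongr; exact le_add_of_nonneg_left (by positivity)
  · gcongr
    exact le_add_of_nonneg_right (by positivity)

end Deadbeat

section RebaseError

variable {E : Type*} [SeminormedAddCommGroup E]

/-- The order of the change at `x` of a first-order expansion when its base point moves from `q`
to `q'`. -/
def rebaseError (q q' x : E) : ℝ := ‖q' - q‖ * (‖q' - q‖ + ‖x - q'‖)

theorem rebaseError_nonneg (q q' x : E) : 0 ≤ rebaseError q q' x := by
  unfold rebaseError
  positivity

theorem rebaseError_le {q q' x : E} {a b : ℝ} (ha : ‖q' - q‖ ≤ a) (hb : ‖x - q'‖ ≤ b) :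
    rebaseError q q' x ≤ a * (a + b) :=
  mul_le_mul ha (add_le_add ha hb) (by positivity) ((norm_nonneg _).trans ha)

end RebaseError

section FirstOrderTaylor

variable {E F : Type*} [NormedAddCommGroup E] [NormedSpace ℝ E] [NormedAddCommGroup F]
  [NormedSpace ℝ F] {g : E → F} {s : Set E} {M : ℝ}

/-- The linearization `x ↦ g q + Dg(q) (x - q)` of `g` at `q`. -/
def firstOrderTaylor (g : E → F) (q x : E) : F := g q + fderiv ℝ g q (x - q)

theorem firstOrderTaylor_sub (g : E → F) (q x y : E) :
    firstOrderTaylor g q x - firstOrderTaylor g q y = fderiv ℝ g q (x - y) := by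
  rw [firstOrderTaylor, firstOrderTaylor, add_sub_add_left_eq_sub, ← map_sub,
    sub_sub_sub_cancel_right]

/-- `g` is differentiable on the convex set `s`, with a derivative that is both bounded by `M`
and `M`-Lipschitz there; this controls all first-order Taylor expansions of `g` within `s`. The
field `nonneg` only matters for empty `s`. -/
structure TaylorBoundOn (g : E → F) (s : Set E) (M : ℝ) : Prop where
  nonneg : 0 ≤ M
  convex : Convex ℝ s
  differentiableAt : ∀ x ∈ s, DifferentiableAt ℝ g x
  norm_fderiv_le : ∀ x ∈ s, ‖fderiv ℝ g x‖ ≤ M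
  norm_fderiv_sub_le : ∀ x ∈ s, ∀ y ∈ s, ‖fderiv ℝ g y - fderiv ℝ g x‖ ≤ M * ‖y - x‖

theorem exists_taylorBoundOn (hg : ContDiff ℝ 2 g) (hs : IsCompact s)
    (hconv : Convex ℝ s) : ∃ M, TaylorBoundOn g s M := by
  have hg' : ContDiff ℝ 1 (fderiv ℝ g) := hg.fderiv_right (by norm_num)
  obtain ⟨M₁, h₁⟩ := hs.exists_bound_of_continuousOn hg'.continuous.continuousOn
  obtain ⟨M₂, h₂⟩ := hs.exists_bound_of_continuousOn
    (hg'.continuous_fderiv (by norm_num)).continuousOn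
  refine ⟨max 1 (max M₁ M₂), zero_le_one.trans (le_max_left _ _), hconv,
    fun x _ => (hg.differentiable (by norm_num)).differentiableAt,
    fun x hx => (h₁ x hx).trans ((le_max_left _ _).trans (le_max_right _ _)),
    fun x hx y hy => hconv.norm_image_sub_le_of_norm_fderiv_le
      (fun z _ => (hg'.differentiable (by norm_num)).differentiableAt)
      (fun z hz => (h₂ z hz).trans ((le_max_right _ _).trans (le_max_right _ _))) hx hy⟩

namespace TaylorBoundOn

theorem norm_fderiv_apply_le (hg : TaylorBoundOn g s M) {q : E} (hq : q ∈ s) (v : E) :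
    ‖fderiv ℝ g q v‖ ≤ M * ‖v‖ :=
  (fderiv ℝ g q).le_of_opNorm_le (hg.norm_fderiv_le q hq) v

theorem norm_sub_le (hg : TaylorBoundOn g s M) {x y : E} (hx : x ∈ s) (hy : y ∈ s) :
    ‖g y - g x‖ ≤ M * ‖y - x‖ :=
  hg.convex.norm_image_sub_le_of_norm_fderiv_le hg.differentiableAt hg.norm_fderiv_le hx hy

theorem norm_sub_firstOrderTaylor_le (hg : TaylorBoundOn g s M) {q x : E}
    (hq : q ∈ s) (hx : x ∈ s) : ‖g x - firstOrderTaylor g q x‖ ≤ M * ‖x - q‖ ^ 2 := by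
  have hseg := hg.convex.segment_subset hq hx
  have hmvt := (convex_segment q x).norm_image_sub_le_of_norm_fderiv_le' (φ := fderiv ℝ g q)
    (C := M * ‖x - q‖) (fun z hz => hg.differentiableAt z (hseg hz))
    (fun z hz => (hg.norm_fderiv_sub_le q hq z (hseg hz)).trans
      (mul_le_mul_of_nonneg_left (norm_sub_le_of_mem_segment hz) hg.nonneg))
    (left_mem_segment ℝ q x) (right_mem_segment ℝ q x)
  calc ‖g x - firstOrderTaylor g q x‖ = ‖g x - g q - fderiv ℝ g q (x - q)‖ := by
        rw [firstOrderTaylor, sub_add_eq_sub_sub]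
    _ ≤ M * ‖x - q‖ * ‖x - q‖ := hmvt
    _ = M * ‖x - q‖ ^ 2 := by ring

theorem norm_firstOrderTaylor_sub_firstOrderTaylor_le (hg : TaylorBoundOn g s M)
    {q q' : E} (hq : q ∈ s) (hq' : q' ∈ s) (x : E) :
    ‖firstOrderTaylor g q' x - firstOrderTaylor g q x‖ ≤ M * rebaseError q q' x := by
  have hsplit : firstOrderTaylor g q' x - firstOrderTaylor g q x =
      (g q' - firstOrderTaylor g q q') + (fderiv ℝ g q' - fderiv ℝ g q) (x - q') := by
    simp only [firstOrderTaylor, _root_.sub_apply, map_sub]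
    abel
  calc ‖firstOrderTaylor g q' x - firstOrderTaylor g q x‖
      ≤ ‖g q' - firstOrderTaylor g q q'‖ + ‖(fderiv ℝ g q' - fderiv ℝ g q) (x - q')‖ :=
        hsplit ▸ norm_add_le _ _
    _ ≤ M * ‖q' - q‖ ^ 2 + M * ‖q' - q‖ * ‖x - q'‖ :=
        add_le_add (hg.norm_sub_firstOrderTaylor_le hq hq')
          (ContinuousLinearMap.le_of_opNorm_le _ (hg.norm_fderiv_sub_le q hq q' hq') _)
    _ = M * rebaseError q q' x := by
        rw [rebaseError]
        ring

end TaylorBoundOn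

end FirstOrderTaylor

section Linearization

variable {n m p : ℕ}

theorem jac_mulVec {k : ℕ} (g : (Fin n → ℝ) → Fin k → ℝ) (x v : Fin n → ℝ) :
    jac g x *ᵥ v = fderiv ℝ g x v := by
  rw [jac, ← Matrix.toLin'_apply, Matrix.toLin'_toMatrix']
  rfl

theorem hlin_eq (h0 : (Fin n → ℝ) → Fin p → ℝ) (D : Matrix (Fin p) (Fin m) ℝ)
    (q x : Fin n → ℝ) (u : Fin m → ℝ) :
    hlin h0 D q x u = firstOrderTaylor h0 q x + D *ᵥ u := by
  rw [hlin, firstOrderTaylor, jac_mulVec, jac_mulVec, map_sub]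
  abel

theorem flin_eq (f0 : (Fin n → ℝ) → Fin n → ℝ) (B : Matrix (Fin n) (Fin m) ℝ)
    (q x : Fin n → ℝ) (u : Fin m → ℝ) :
    flin f0 B q x u = firstOrderTaylor f0 q x + B *ᵥ u :=
  hlin_eq f0 B q x u

theorem hlin_sub (h0 : (Fin n → ℝ) → Fin p → ℝ) (D : Matrix (Fin p) (Fin m) ℝ)
    (q x x' : Fin n → ℝ) (u u' : Fin m → ℝ) :
    hlin h0 D q x' u' - hlin h0 D q x u = fderiv ℝ h0 q (x' - x) + D *ᵥ (u' - u) := by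
  rw [hlin_eq, hlin_eq, ← firstOrderTaylor_sub, Matrix.mulVec_sub]
  abel

theorem hlin_add_smul_sub (h0 : (Fin n → ℝ) → Fin p → ℝ) (D : Matrix (Fin p) (Fin m) ℝ)
    (q x x' : Fin n → ℝ) (u u' : Fin m → ℝ) (t : ℝ) :
    hlin h0 D q (x + t • (x' - x)) (u + t • (u' - u)) =
      hlin h0 D q x u + t • (hlin h0 D q x' u' - hlin h0 D q x u) := by
  rw [← sub_eq_iff_eq_add', hlin_sub, hlin_sub, add_sub_cancel_left, add_sub_cancel_left,
    map_smul, Matrix.mulVec_smul, smul_add]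

end Linearization

section SteadyState

variable {n m p : ℕ} {f0 : (Fin n → ℝ) → Fin n → ℝ} {h0 : (Fin n → ℝ) → Fin p → ℝ}
  {B : Matrix (Fin n) (Fin m) ℝ} {D : Matrix (Fin p) (Fin m) ℝ} {Us : Set (Fin m → ℝ)}
  {S : Matrix (Fin p) (Fin p) ℝ} {yr : Fin p → ℝ} {q x x' : Fin n → ℝ} {u u' : Fin m → ℝ}

/-- The cost `‖yˢ - yʳ‖_S²` of the pair `(x, u)`, with the output of the linearization at `q`;
its minimum over the steady states of that linearization is `Jeqlin`. -/
def steadyCost (h0 : (Fin n → ℝ) → Fin p → ℝ) (D : Matrix (Fin p) (Fin m) ℝ)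
    (S : Matrix (Fin p) (Fin p) ℝ) (yr : Fin p → ℝ) (q x : Fin n → ℝ) (u : Fin m → ℝ) : ℝ :=
  qn S (hlin h0 D q x u - yr)

theorem mem_Zlin_iff :
    (x, u) ∈ Zlin f0 B Us q ↔ u ∈ Us ∧ x = firstOrderTaylor f0 q x + B *ᵥ u := by
  simp only [Zlin, Set.mem_ofPred_eq, flin_eq]

theorem sub_eq_of_mem_Zlin (hx : (x, u) ∈ Zlin f0 B Us q) (hx' : (x', u') ∈ Zlin f0 B Us q) :
    x' - x = fderiv ℝ f0 q (x' - x) + B *ᵥ (u' - u) :=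
  (congrArg₂ (· - ·) hx'.2 hx.2).trans (hlin_sub f0 B q x x' u u')

theorem add_smul_sub_mem_Zlin (hUs : Convex ℝ Us) (hx : (x, u) ∈ Zlin f0 B Us q)
    (hx' : (x', u') ∈ Zlin f0 B Us q) {t : ℝ} (ht : t ∈ Set.Icc (0 : ℝ) 1) :
    (x + t • (x' - x), u + t • (u' - u)) ∈ Zlin f0 B Us q := by
  refine ⟨hUs.add_smul_sub_mem hx.1 hx'.1 ht, ?_⟩
  calc x + t • (x' - x) = flin f0 B q x u + t • (flin f0 B q x' u' - flin f0 B q x u) := by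
        rw [← hx.2, ← hx'.2]
    _ = flin f0 B q (x + t • (x' - x)) (u + t • (u' - u)) :=
        (hlin_add_smul_sub f0 B q x x' u u' t).symm

theorem isCompact_Zlin (hUs : IsClosed Us) {K : Set ((Fin n → ℝ) × (Fin m → ℝ))}
    (hK : IsCompact K) (hq : Zlin f0 B Us q ⊆ K) : IsCompact (Zlin f0 B Us q) := by
  refine hK.of_isClosed_subset ?_ hq
  refine (hUs.preimage continuous_snd).inter (isClosed_eq continuous_fst ?_)
  unfold flin
  fun_prop

theorem steadyCost_add_smul_sub (t : ℝ) :
    steadyCost h0 D S yr q (x + t • (x' - x)) (u + t • (u' - u)) =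
      (1 - t) * steadyCost h0 D S yr q x u + t * steadyCost h0 D S yr q x' u' -
        t * (1 - t) * qn S (hlin h0 D q x' u' - hlin h0 D q x u) := by
  have hsub : hlin h0 D q x' u' - hlin h0 D q x u =
      (hlin h0 D q x' u' - yr) - (hlin h0 D q x u - yr) := (sub_sub_sub_cancel_right _ _ _).symm
  rw [steadyCost, hlin_add_smul_sub, add_sub_right_comm, hsub, qn_add_smul_sub]
  rfl

theorem Jeqlin_le_steadyCost (hS : S.PosDef) (hx : (x, u) ∈ Zlin f0 B Us q) :
    Jeqlin f0 h0 B D Us S yr q ≤ steadyCost h0 D S yr q x u := by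
  refine csInf_le ⟨0, ?_⟩ ⟨(x, u), hx, rfl⟩
  rintro c ⟨z, -, rfl⟩
  exact qn_nonneg hS _

theorem exists_steadyCost_eq_Jeqlin (hc : IsCompact (Zlin f0 B Us q))
    (hne : (Zlin f0 B Us q).Nonempty) :
    ∃ x u, (x, u) ∈ Zlin f0 B Us q ∧
      steadyCost h0 D S yr q x u = Jeqlin f0 h0 B D Us S yr q := by
  have hcont : Continuous fun z : (Fin n → ℝ) × (Fin m → ℝ) => steadyCost h0 D S yr q z.1 z.2 := by
    refine (continuous_qn S).comp (Continuous.sub ?_ continuous_const)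
    unfold hlin
    fun_prop
  obtain ⟨z, hz, hmin⟩ := hc.exists_isMinOn hne hcont.continuousOn
  refine ⟨z.1, z.2, hz, Eq.symm (IsLeast.csInf_eq ⟨⟨z, hz, rfl⟩, ?_⟩)⟩
  rintro c ⟨z', hz', rfl⟩
  exact hmin hz'

theorem A4holds.exists_resolvent {σ : ℝ} (h : A4holds f0 σ) (hσ : 0 < σ) (q w : Fin n → ℝ) :
    ∃ v, v - fderiv ℝ f0 q v = w ∧ σ * ‖v‖ ≤ √n * ‖w‖ := by
  have hbound : ∀ v, σ * ‖v‖ ≤ √n * ‖v - fderiv ℝ f0 q v‖ := fun v => calc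
    σ * ‖v‖ ≤ σ * en v := by gcongr; exact norm_le_en v
    _ ≤ en (v - fderiv ℝ f0 q v) := jac_mulVec f0 q v ▸ h q v
    _ ≤ √n * ‖v - fderiv ℝ f0 q v‖ := en_le_sqrt_mul_norm _
  let L : (Fin n → ℝ) →ₗ[ℝ] (Fin n → ℝ) := LinearMap.id - (fderiv ℝ f0 q).toLinearMap
  have hinj : Function.Injective L := (injective_iff_map_eq_zero L).2 fun v hv => by
    have hzero := hbound v
    rw [show v - fderiv ℝ f0 q v = 0 from hv, norm_zero, mul_zero] at hzero
    exact norm_le_zero_iff.1 (nonpos_of_mul_nonpos_right hzero hσ)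
  obtain ⟨v, rfl⟩ := LinearMap.injective_iff_surjective.1 hinj w
  exact ⟨v, rfl, hbound v⟩

theorem A2holds.mul_norm_sub_le {σ : ℝ} (h : A2holds f0 h0 B D σ) (hσ : 0 < σ)
    (hx : (x, u) ∈ Zlin f0 B Us q) (hx' : (x', u') ∈ Zlin f0 B Us q) :
    σ * ‖x' - x‖ ≤ √p * ‖hlin h0 D q x' u' - hlin h0 D q x u‖ := by
  have hstate : jac f0 q *ᵥ (x' - x) - (x' - x) + B *ᵥ (u' - u) = 0 := by
    rw [jac_mulVec, sub_add_eq_add_sub, ← sub_eq_of_mem_Zlin hx hx', sub_self]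
  have hsing := h q (x' - x) (u' - u)
  rw [hstate, jac_mulVec, ← hlin_sub] at hsing
  have hzero : en (0 : Fin n → ℝ) = 0 := by simp [en]
  rw [hzero, zero_pow two_ne_zero, zero_add, Real.sqrt_sq (en_nonneg _)] at hsing
  calc σ * ‖x' - x‖ ≤ σ * √(en (x' - x) ^ 2 + en (u' - u) ^ 2) := by
        gcongr
        exact (norm_le_en _).trans
          (Real.le_sqrt_of_sq_le (le_add_of_nonneg_right (sq_nonneg _)))
    _ ≤ √p * ‖hlin h0 D q x' u' - hlin h0 D q x u‖ := hsing.trans (en_le_sqrt_mul_norm _)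

/-- Quadratic growth, from testing optimality of `(x, u)` at the midpoint of the two states. -/
theorem exists_sq_norm_sub_le_steadyCost_sub_Jeqlin (hUs : Convex ℝ Us) (hS : S.PosDef) {σ : ℝ}
    (hσ : 0 < σ) (hA2 : A2holds f0 h0 B D σ) :
    ∃ c > 0, ∀ {q x x' : Fin n → ℝ} {u u' : Fin m → ℝ}, (x, u) ∈ Zlin f0 B Us q →
      (x', u') ∈ Zlin f0 B Us q →
      steadyCost h0 D S yr q x u = Jeqlin f0 h0 B D Us S yr q →
      ‖x' - x‖ ^ 2 ≤ c * (steadyCost h0 D S yr q x' u' - Jeqlin f0 h0 B D Us S yr q) := by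
  obtain ⟨l, hl, hlower⟩ := exists_le_qn hS
  refine ⟨2 * (p + 1) / (l * σ ^ 2), by positivity, fun {q x x' u u'} hx hx' hmin => ?_⟩
  have hmid := Jeqlin_le_steadyCost (h0 := h0) (D := D) (yr := yr) hS
    (add_smul_sub_mem_Zlin hUs hx hx' (t := 1 / 2) (by norm_num))
  rw [steadyCost_add_smul_sub, hmin] at hmid
  set Δ := ‖hlin h0 D q x' u' - hlin h0 D q x u‖
  have hout : l * Δ ^ 2 ≤
      2 * (steadyCost h0 D S yr q x' u' - Jeqlin f0 h0 B D Us S yr q) := by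
    linarith [hlower (hlin h0 D q x' u' - hlin h0 D q x u)]
  have hstate : σ ^ 2 * ‖x' - x‖ ^ 2 ≤ p * Δ ^ 2 := by
    have hsq := pow_le_pow_left₀ (by positivity) (hA2.mul_norm_sub_le hσ hx hx') 2
    rwa [mul_pow, mul_pow, Real.sq_sqrt (Nat.cast_nonneg p)] at hsq
  rw [div_mul_eq_mul_div, le_div_iff₀ (by positivity)]
  calc ‖x' - x‖ ^ 2 * (l * σ ^ 2) = l * (σ ^ 2 * ‖x' - x‖ ^ 2) := by ring
    _ ≤ l * ((p + 1) * Δ ^ 2) :=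
        mul_le_mul_of_nonneg_left (hstate.trans (by gcongr; linarith)) hl.le
    _ = (p + 1) * (l * Δ ^ 2) := by ring
    _ ≤ 2 * (p + 1) * (steadyCost h0 D S yr q x' u' - Jeqlin f0 h0 B D Us S yr q) := by
        rw [mul_comm (2 : ℝ), mul_assoc]
        gcongr

end SteadyState

section SteadyTransfer

variable {n m p : ℕ} {f0 : (Fin n → ℝ) → Fin n → ℝ} {h0 : (Fin n → ℝ) → Fin p → ℝ}
  {S : Matrix (Fin p) (Fin p) ℝ} {s : Set (Fin n → ℝ)} {M₁ M₂ : ℝ}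

theorem norm_hlin_sub_hlin_le (hh : TaylorBoundOn h0 s M₂) {q q' : Fin n → ℝ} (hq : q ∈ s)
    (hq' : q' ∈ s) (D : Matrix (Fin p) (Fin m) ℝ) (x x' : Fin n → ℝ) (u : Fin m → ℝ) :
    ‖hlin h0 D q' x' u - hlin h0 D q x u‖ ≤ M₂ * ‖x' - x‖ + M₂ * rebaseError q q' x := by
  have hsplit : hlin h0 D q' x' u - hlin h0 D q x u = fderiv ℝ h0 q' (x' - x) +
      (firstOrderTaylor h0 q' x - firstOrderTaylor h0 q x) := by
    rw [hlin_eq, hlin_eq, ← firstOrderTaylor_sub h0 q' x' x]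
    abel
  exact hsplit ▸ norm_add_le_of_le (hh.norm_fderiv_apply_le hq' _)
    (hh.norm_firstOrderTaylor_sub_firstOrderTaylor_le hq hq' x)

theorem exists_steady_transfer (hf : TaylorBoundOn f0 s M₁)
    (hh : TaylorBoundOn h0 s M₂) {σ : ℝ} (hσ : 0 < σ) (hA4 : A4holds f0 σ)
    (B : Matrix (Fin n) (Fin m) ℝ) (D : Matrix (Fin p) (Fin m) ℝ) (Us : Set (Fin m → ℝ)) :
    ∃ C > 0, ∀ q ∈ s, ∀ q' ∈ s, ∀ x u, (x, u) ∈ Zlin f0 B Us q →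
      ∃ x', (x', u) ∈ Zlin f0 B Us q' ∧ ‖x' - x‖ ≤ C * rebaseError q q' x ∧
        ‖hlin h0 D q' x' u - hlin h0 D q x u‖ ≤ C * rebaseError q q' x := by
  have hM₁ := hf.nonneg
  have hM₂ := hh.nonneg
  set c := √n * M₁ / σ with hc
  refine ⟨c + M₂ * (c + 1) + 1, by positivity, fun q hq q' hq' x u hx => ?_⟩
  rw [mem_Zlin_iff] at hx
  set τ := rebaseError q q' x
  have hτ : 0 ≤ τ := rebaseError_nonneg q q' x
  obtain ⟨d, hd, hd_le⟩ := hA4.exists_resolvent hσ q'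
    (firstOrderTaylor f0 q' x - firstOrderTaylor f0 q x)
  have hd_norm : ‖d‖ ≤ c * τ := by
    rw [hc, div_mul_eq_mul_div, le_div_iff₀ hσ, mul_comm, mul_assoc]
    exact hd_le.trans (by
      gcongr
      exact hf.norm_firstOrderTaylor_sub_firstOrderTaylor_le hq hq' x)
  refine ⟨x + d, mem_Zlin_iff.2 ⟨hx.1, ?_⟩, ?_, ?_⟩
  · have hstep := firstOrderTaylor_sub f0 q' (x + d) x
    rw [add_sub_cancel_left] at hstep
    calc x + d = firstOrderTaylor f0 q x + B *ᵥ u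
          + (fderiv ℝ f0 q' d + (d - fderiv ℝ f0 q' d)) := by rw [add_sub_cancel, ← hx.2]
      _ = firstOrderTaylor f0 q' (x + d) + B *ᵥ u := by
          rw [hd, ← hstep]
          abel
  · rw [add_sub_cancel_left]
    refine hd_norm.trans ?_
    gcongr
    linarith [show 0 ≤ M₂ * (c + 1) by positivity]
  · calc ‖hlin h0 D q' (x + d) u - hlin h0 D q x u‖ ≤ M₂ * (c * τ) + M₂ * τ := by
          refine (norm_hlin_sub_hlin_le hh hq hq' D x (x + d) u).trans ?_
          rw [add_sub_cancel_left]
          gcongr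
      _ = M₂ * (c + 1) * τ := by ring
      _ ≤ (c + M₂ * (c + 1) + 1) * τ := by
          gcongr
          linarith [show 0 ≤ c by positivity]

theorem exists_steady_transfer_steadyCost (hS : S.PosDef) (hf : TaylorBoundOn f0 s M₁)
    (hh : TaylorBoundOn h0 s M₂) {σ : ℝ} (hσ : 0 < σ)
    (hA4 : A4holds f0 σ) (B : Matrix (Fin n) (Fin m) ℝ) (D : Matrix (Fin p) (Fin m) ℝ)
    (Us : Set (Fin m → ℝ)) (yr : Fin p → ℝ) :
    ∃ C > 0, ∀ q ∈ s, ∀ q' ∈ s, ∀ x u, (x, u) ∈ Zlin f0 B Us q →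
      ∀ θ ≥ 0, steadyCost h0 D S yr q x u ≤ θ ^ 2 →
      ∃ x', (x', u) ∈ Zlin f0 B Us q' ∧ ‖x' - x‖ ≤ C * rebaseError q q' x ∧
        steadyCost h0 D S yr q' x' u ≤ steadyCost h0 D S yr q x u +
          C * ((θ + rebaseError q q' x) * rebaseError q q' x) := by
  obtain ⟨C, hC, htransfer⟩ := exists_steady_transfer hf hh hσ hA4 B D Us
  obtain ⟨H, hH, hperturb⟩ := exists_qn_perturb_le hS
  refine ⟨C + H * (C + C ^ 2), by positivity, fun q hq q' hq' x u hx θ hθ hcost => ?_⟩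
  obtain ⟨x', hx', hstate, hout⟩ := htransfer q hq q' hq' x u hx
  set τ := rebaseError q q' x
  have hτ : 0 ≤ τ := rebaseError_nonneg q q' x
  have hpert := hperturb (hlin h0 D q x u - yr) (hlin h0 D q' x' u - yr) θ hθ hcost
  rw [sub_sub_sub_cancel_right] at hpert
  refine ⟨x', hx', hstate.trans ?_, hpert.trans ?_⟩
  · gcongr
    exact le_add_of_nonneg_right (by positivity)
  · gcongr ?_ + ?_
    · exact le_rfl
    calc H * (θ * ‖hlin h0 D q' x' u - hlin h0 D q x u‖
          + ‖hlin h0 D q' x' u - hlin h0 D q x u‖ ^ 2)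
        ≤ H * (θ * (C * τ) + (C * τ) ^ 2) := by gcongr
      _ = H * C * (θ * τ) + H * C ^ 2 * (τ * τ) := by ring
      _ ≤ (C + H * (C + C ^ 2)) * (θ * τ) + (C + H * (C + C ^ 2)) * (τ * τ) := by
          gcongr <;> nlinarith [mul_pos hH hC, mul_pos hH (pow_pos hC 2)]
      _ = (C + H * (C + C ^ 2)) * ((θ + τ) * τ) := by ring

end SteadyTransfer

section Bootstrap

theorem le_mul_of_sq_le_add_mul {α β d s : ℝ} (hα : 0 ≤ α) (hβ : 0 ≤ β) (hs : 0 ≤ s)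
    (hd : d ^ 2 ≤ α * s ^ 2 + β * s * d) : d ≤ (1 + α + β) * s := by
  by_contra! hlt
  have hsd : s < d := by nlinarith [mul_nonneg (add_nonneg hα hβ) hs]
  have hαs : α * s ^ 2 ≤ α * s * d := by
    rw [sq, ← mul_assoc]
    gcongr
  nlinarith

theorem add_mul_self_le_mul {k θ τ ε : ℝ} (hθ : 0 ≤ θ) (hτ : 0 ≤ τ) (hε : 0 ≤ ε) (hk : 0 ≤ k)
    (h : τ ≤ k * ε) : (θ + τ) * τ ≤ (1 + k) * k * ((θ + ε) * ε) := calc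
  (θ + τ) * τ ≤ (θ + k * ε) * (k * ε) := by gcongr
  _ ≤ ((1 + k) * (θ + ε)) * (k * ε) := by
      gcongr
      nlinarith [mul_nonneg hk hθ]
  _ = (1 + k) * k * ((θ + ε) * ε) := by ring

/-- A priori boundedness of `d` linearizes the term quadratic in `τ'`, after which `d` is of
order `δ`; this in turn improves `τ'` to order `δ²`. -/
theorem exists_bootstrap_bound {b c k : ℝ} (hb : 0 ≤ b) (hc : 0 ≤ c) (hk : 0 < k) :
    ∃ C > 0, ∀ {d δ θ τ τ' : ℝ}, 0 ≤ d → d ≤ b → 0 ≤ δ → δ ≤ 1 → θ ≤ 1 → 0 ≤ τ → 0 ≤ τ' →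
      τ ≤ k * δ ^ 2 → τ' ≤ k * δ * (δ + d) →
      d ^ 2 ≤ c * (δ ^ 2 + ((θ + τ) * τ + (θ + τ') * τ')) → d ≤ C * δ ∧ τ' ≤ C * δ ^ 2 := by
  set β := (1 + k * (1 + b)) * k with hβ
  set α := 1 + (1 + k) * k + β with hα
  set c₁ := 1 + c * α + c * β
  refine ⟨c₁ + k * (1 + c₁), by positivity,
    fun {d δ θ τ τ'} hd hdb hδ hδ1 hθ hτ hτ' hτk hτk' hsq => ?_⟩
  have hδ2 : δ ^ 2 ≤ 1 := pow_le_one₀ hδ hδ1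
  have hτ_lin : (θ + τ) * τ ≤ (1 + k) * k * δ ^ 2 := calc
    (θ + τ) * τ ≤ (1 + k * 1) * (k * δ ^ 2) := by gcongr; exact hτk.trans (by gcongr)
    _ = (1 + k) * k * δ ^ 2 := by ring
  have hτ'_lin : (θ + τ') * τ' ≤ β * δ * (δ + d) := calc
    (θ + τ') * τ' ≤ (1 + k * 1 * (1 + b)) * (k * δ * (δ + d)) := by
        gcongr
        exact hτk'.trans (by gcongr)
    _ = β * δ * (δ + d) := by rw [hβ]; ring
  have hd_le : d ≤ c₁ * δ := le_mul_of_sq_le_add_mul (by positivity) (by positivity) hδ <| calc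
    d ^ 2 ≤ c * (δ ^ 2 + ((1 + k) * k * δ ^ 2 + β * δ * (δ + d))) := hsq.trans (by gcongr)
    _ = c * α * δ ^ 2 + c * β * δ * d := by rw [hα]; ring
  refine ⟨hd_le.trans ?_, hτk'.trans ?_⟩
  · gcongr
    exact le_add_of_nonneg_right (by positivity)
  · calc k * δ * (δ + d) ≤ k * δ * (δ + c₁ * δ) := by gcongr
      _ = k * (1 + c₁) * δ ^ 2 := by ring
      _ ≤ (c₁ + k * (1 + c₁)) * δ ^ 2 := by
        gcongr
        exact le_add_of_nonneg_left (by positivity)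

theorem exists_rebaseError_le {E : Type*} [SeminormedAddCommGroup E] {c G : ℝ} (hc : 0 < c)
    (hG : 0 < G) :
    ∃ k > 0, ∀ {q q' x x' y : E} {δ : ℝ}, 0 ≤ δ → δ ≤ 1 → ‖q' - q‖ ≤ c * δ → ‖x - q‖ ≤ c * δ →
      ‖x' - x‖ ≤ G * rebaseError q q' x →
      rebaseError q q' x ≤ k * δ ^ 2 ∧ rebaseError q' q y ≤ k * δ * (δ + ‖y - x'‖) := by
  set k₀ := c * (1 + 2 * c + G * (3 * c ^ 2)) with hk₀
  refine ⟨3 * c ^ 2 + k₀, by positivity, fun {q q' x x' y δ} hδ hδ1 hqq hxq hxx => ?_⟩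
  have hqq' : ‖q - q'‖ ≤ c * δ := norm_sub_rev q q' ▸ hqq
  have hδ2 : δ ^ 2 ≤ δ := by nlinarith
  have hforth : rebaseError q q' x ≤ 3 * c ^ 2 * δ ^ 2 := calc
    rebaseError q q' x ≤ c * δ * (c * δ + (c * δ + c * δ)) :=
        rebaseError_le hqq
          ((norm_sub_le_norm_sub_add_norm_sub x q q').trans (add_le_add hxq hqq'))
    _ = 3 * c ^ 2 * δ ^ 2 := by ring
  have hyq : ‖y - q‖ ≤ ‖y - x'‖ + (G * (3 * c ^ 2 * δ) + c * δ) := by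
    refine (norm_sub_le_norm_sub_add_norm_sub y x' q).trans ?_
    gcongr
    refine (norm_sub_le_norm_sub_add_norm_sub x' x q).trans (add_le_add (hxx.trans ?_) hxq)
    exact mul_le_mul_of_nonneg_left (hforth.trans (by gcongr)) hG.le
  refine ⟨hforth.trans ?_, ?_⟩
  · gcongr
    exact le_add_of_nonneg_right (by positivity)
  · calc rebaseError q' q y ≤ c * δ * (c * δ + (‖y - x'‖ + (G * (3 * c ^ 2 * δ) + c * δ))) :=
          rebaseError_le hqq' hyq
      _ = c * δ * ((2 * c + G * (3 * c ^ 2)) * δ + ‖y - x'‖) := by ring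
      _ ≤ c * δ * ((1 + 2 * c + G * (3 * c ^ 2)) * (δ + ‖y - x'‖)) := by
          have hconst : 0 ≤ 2 * c + G * (3 * c ^ 2) := by positivity
          gcongr
          nlinarith [norm_nonneg (y - x')]
      _ = k₀ * δ * (δ + ‖y - x'‖) := by rw [hk₀]; ring
      _ ≤ (3 * c ^ 2 + k₀) * δ * (δ + ‖y - x'‖) := by
          gcongr
          exact le_add_of_nonneg_left (by positivity)

theorem exists_rebase_bootstrap_bound {E : Type*} [SeminormedAddCommGroup E] {b c G : ℝ}
    (hb : 0 ≤ b) (hc : 0 < c) (hG : 0 < G) :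
    ∃ C > 0, ∀ {q q' x x' y : E} {δ θ : ℝ}, δ ∈ Set.Icc (0 : ℝ) 1 → θ ∈ Set.Icc (0 : ℝ) 1 →
      ‖q' - q‖ ≤ c * δ → ‖x - q‖ ≤ c * δ → ‖x' - x‖ ≤ G * rebaseError q q' x → ‖y - x'‖ ≤ b →
      ‖y - x'‖ ^ 2 ≤ G * (δ ^ 2 + ((θ + rebaseError q q' x) * rebaseError q q' x +
        (θ + rebaseError q' q y) * rebaseError q' q y)) →
      ‖x' - x‖ ≤ C * δ ^ 2 ∧ ‖y - x'‖ ≤ C * δ ∧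
        (θ + rebaseError q q' x) * rebaseError q q' x +
          (θ + rebaseError q' q y) * rebaseError q' q y ≤ C * ((θ + δ ^ 2) * δ ^ 2) := by
  obtain ⟨k, hk, hrebase⟩ := exists_rebaseError_le (E := E) hc hG
  obtain ⟨C, hC, hboot⟩ := exists_bootstrap_bound hb hG.le hk
  set C' := (1 + k) * k + (1 + C) * C with hC'
  refine ⟨G * k + C + C', by positivity,
    fun {q q' x x' y δ θ} ⟨hδ, hδ1⟩ ⟨hθ, hθ1⟩ hqq hxq hdist hd hsq => ?_⟩
  obtain ⟨hτk, hτk'⟩ := hrebase (y := y) hδ hδ1 hqq hxq hdist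
  have hτ := rebaseError_nonneg q q' x
  have hτ' := rebaseError_nonneg q' q y
  obtain ⟨hyx, hτC⟩ := hboot (norm_nonneg _) hd hδ hδ1 hθ1 hτ hτ' hτk hτk' hsq
  refine ⟨?_, hyx.trans ?_, ?_⟩
  · calc ‖x' - x‖ ≤ G * (k * δ ^ 2) := hdist.trans (by gcongr)
      _ ≤ (G * k + C + C') * δ ^ 2 := by
        rw [← mul_assoc, add_assoc]
        gcongr
        exact le_add_of_nonneg_right (by positivity)
  · gcongr
    linarith [show 0 ≤ G * k + C' by positivity]
  · calc _ ≤ (1 + k) * k * ((θ + δ ^ 2) * δ ^ 2) + (1 + C) * C * ((θ + δ ^ 2) * δ ^ 2) :=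
          add_le_add (add_mul_self_le_mul hθ hτ (sq_nonneg δ) hk.le hτk)
            (add_mul_self_le_mul hθ hτ' (sq_nonneg δ) hC.le hτC)
      _ = C' * ((θ + δ ^ 2) * δ ^ 2) := by rw [hC']; ring
      _ ≤ (G * k + C + C') * ((θ + δ ^ 2) * δ ^ 2) := by
        gcongr
        exact le_add_of_nonneg_left (by positivity)

end Bootstrap

section SteadyComparison

variable {n m p : ℕ} {f0 : (Fin n → ℝ) → Fin n → ℝ} {h0 : (Fin n → ℝ) → Fin p → ℝ}
  {B : Matrix (Fin n) (Fin m) ℝ} {D : Matrix (Fin p) (Fin m) ℝ} {Us : Set (Fin m → ℝ)}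
  {S : Matrix (Fin p) (Fin p) ℝ} {yr : Fin p → ℝ} {s : Set (Fin n → ℝ)} {M₁ M₂ σs σl : ℝ}
  {𝓑 : Set ((Fin n → ℝ) × (Fin m → ℝ))}

theorem exists_steady_gap_compare (hUs : IsClosed Us) (hUsconv : Convex ℝ Us) (hS : S.PosDef)
    (hf : TaylorBoundOn f0 s M₁) (hh : TaylorBoundOn h0 s M₂)
    (hσs : 0 < σs) (hA2 : A2holds f0 h0 B D σs) (hσl : 0 < σl) (hA4 : A4holds f0 σl)
    (h𝓑 : IsCompact 𝓑) (hA5 : ∀ q : Fin n → ℝ, Zlin f0 B Us q ⊆ 𝓑) :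
    ∃ C > 0, ∀ q ∈ s, ∀ q' ∈ s, ∀ x u, (x, u) ∈ Zlin f0 B Us q → ∀ θ ≥ 0,
      steadyCost h0 D S yr q x u ≤ θ ^ 2 → Jeqlin f0 h0 B D Us S yr q' ≤ θ ^ 2 →
      ∃ x' xm um, (x', u) ∈ Zlin f0 B Us q' ∧ (xm, um) ∈ Zlin f0 B Us q' ∧
        steadyCost h0 D S yr q' xm um = Jeqlin f0 h0 B D Us S yr q' ∧
        ‖x' - x‖ ≤ C * rebaseError q q' x ∧
        ‖xm - x'‖ ^ 2 ≤
          C * (steadyCost h0 D S yr q' x' u - Jeqlin f0 h0 B D Us S yr q') ∧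
        steadyCost h0 D S yr q' x' u - Jeqlin f0 h0 B D Us S yr q' ≤
          steadyCost h0 D S yr q x u - Jeqlin f0 h0 B D Us S yr q +
            C * ((θ + rebaseError q q' x) * rebaseError q q' x +
              (θ + rebaseError q' q xm) * rebaseError q' q xm) := by
  obtain ⟨C, hC, htransfer⟩ :=
    exists_steady_transfer_steadyCost hS hf hh hσl hA4 B D Us yr
  obtain ⟨c, hc, hgrowth⟩ := exists_sq_norm_sub_le_steadyCost_sub_Jeqlin (yr := yr) hUsconv hS
    hσs hA2
  refine ⟨C + c, by positivity, fun q hq q' hq' x u hx θ hθ hcost hJ' => ?_⟩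
  obtain ⟨x', hx', hdist, hcost'⟩ := htransfer q hq q' hq' x u hx θ hθ hcost
  obtain ⟨xm, um, hxm, hmin⟩ := exists_steadyCost_eq_Jeqlin (h0 := h0) (D := D) (S := S)
    (yr := yr) (isCompact_Zlin hUs h𝓑 (hA5 q')) ⟨_, hx'⟩
  obtain ⟨xo, hxo, -, hback⟩ := htransfer q' hq' q hq xm um hxm θ hθ (hmin.trans_le hJ')
  have hτ := rebaseError_nonneg q q' x
  have hτ' := rebaseError_nonneg q' q xm
  have hJ : Jeqlin f0 h0 B D Us S yr q ≤ Jeqlin f0 h0 B D Us S yr q' +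
      C * ((θ + rebaseError q' q xm) * rebaseError q' q xm) :=
    hmin ▸ (Jeqlin_le_steadyCost hS hxo).trans hback
  have hgap := Jeqlin_le_steadyCost (h0 := h0) (D := D) (yr := yr) hS hx'
  refine ⟨x', xm, um, hx', hxm, hmin, hdist.trans ?_, ?_, ?_⟩
  · gcongr
    exact le_add_of_nonneg_right hc.le
  · rw [norm_sub_rev]
    refine (hgrowth hxm hx' hmin).trans (mul_le_mul_of_nonneg_right ?_ (sub_nonneg.2 hgap))
    exact le_add_of_nonneg_left hC.le
  · have hcτ : 0 ≤ c * ((θ + rebaseError q q' x) * rebaseError q q' x +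
        (θ + rebaseError q' q xm) * rebaseError q' q xm) := by positivity
    linarith

theorem exists_steady_compare (hUs : IsClosed Us) (hUsconv : Convex ℝ Us) (hS : S.PosDef)
    (hf : TaylorBoundOn f0 s M₁) (hh : TaylorBoundOn h0 s M₂)
    (hσs : 0 < σs) (hA2 : A2holds f0 h0 B D σs) (hσl : 0 < σl) (hA4 : A4holds f0 σl)
    (h𝓑 : IsCompact 𝓑) (hA5 : ∀ q : Fin n → ℝ, Zlin f0 B Us q ⊆ 𝓑) {c : ℝ} (hc : 0 < c) :
    ∃ C > 0, ∀ q ∈ s, ∀ q' ∈ s, ∀ x u, (x, u) ∈ Zlin f0 B Us q →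
      ∀ δ ∈ Set.Icc (0 : ℝ) 1, ∀ θ ∈ Set.Icc (0 : ℝ) 1, ‖q' - q‖ ≤ c * δ → ‖x - q‖ ≤ c * δ →
      steadyCost h0 D S yr q x u - Jeqlin f0 h0 B D Us S yr q ≤ δ ^ 2 →
      steadyCost h0 D S yr q x u ≤ θ ^ 2 → Jeqlin f0 h0 B D Us S yr q' ≤ θ ^ 2 →
      ∃ x' xm um, (x', u) ∈ Zlin f0 B Us q' ∧ (xm, um) ∈ Zlin f0 B Us q' ∧
        steadyCost h0 D S yr q' xm um = Jeqlin f0 h0 B D Us S yr q' ∧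
        ‖x' - x‖ ≤ C * δ ^ 2 ∧ ‖xm - x'‖ ≤ C * δ ∧
        steadyCost h0 D S yr q' x' u - Jeqlin f0 h0 B D Us S yr q' ≤
          steadyCost h0 D S yr q x u - Jeqlin f0 h0 B D Us S yr q +
            C * ((θ + δ ^ 2) * δ ^ 2) := by
  obtain ⟨b, hb, hbound⟩ := h𝓑.isBounded.exists_pos_norm_le
  obtain ⟨G, hG, hcompare⟩ := exists_steady_gap_compare (yr := yr) hUs hUsconv hS hf hh
    hσs hA2 hσl hA4 h𝓑 hA5
  obtain ⟨C, hC, hboot⟩ := exists_rebase_bootstrap_bound (E := Fin n → ℝ) (b := 2 * b)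
    (G := G + G ^ 2) (by positivity) hc (by positivity)
  refine ⟨C + G * C, by positivity,
    fun q hq q' hq' x u hx δ hδ θ hθ hqq hxq hgap hcost hJ' => ?_⟩
  obtain ⟨x', xm, um, hx', hxm, hmin, hdist, hgrow, hgap'⟩ :=
    hcompare q hq q' hq' x u hx θ hθ.1 hcost hJ'
  have hτ := rebaseError_nonneg q q' x
  have hτ' := rebaseError_nonneg q' q xm
  have hd : ‖xm - x'‖ ≤ 2 * b := by
    have hxm_le := (norm_fst_le (xm, um)).trans (hbound _ (hA5 _ hxm))
    have hx'_le := (norm_fst_le (x', u)).trans (hbound _ (hA5 _ hx'))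
    linarith [norm_sub_le xm x']
  set e := (θ + rebaseError q q' x) * rebaseError q q' x +
    (θ + rebaseError q' q xm) * rebaseError q' q xm
  have he : 0 ≤ e := by have := hθ.1; positivity
  have hsq : ‖xm - x'‖ ^ 2 ≤ (G + G ^ 2) * (δ ^ 2 + e) := calc
    ‖xm - x'‖ ^ 2 ≤ G * (δ ^ 2 + G * e) :=
      hgrow.trans (mul_le_mul_of_nonneg_left (hgap'.trans (by gcongr)) hG.le)
    _ ≤ G * (δ ^ 2 + G * e) + (G * e + G ^ 2 * δ ^ 2) := le_add_of_nonneg_right (by positivity)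
    _ = (G + G ^ 2) * (δ ^ 2 + e) := by ring
  have hG_le : G ≤ G + G ^ 2 := le_add_of_nonneg_right (sq_nonneg G)
  obtain ⟨hx'_x, hxm_x', hsum⟩ := hboot hδ hθ hqq hxq
    (hdist.trans (mul_le_mul_of_nonneg_right hG_le hτ)) hd hsq
  have hC_le : C ≤ C + G * C := le_add_of_nonneg_right (by positivity)
  have hδ0 := hδ.1
  have hθ0 := hθ.1
  refine ⟨x', xm, um, hx', hxm, hmin, hx'_x.trans (by gcongr), hxm_x'.trans (by gcongr),
    hgap'.trans ?_⟩
  gcongr ?_ + ?_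
  · exact le_rfl
  calc G * e ≤ G * (C * ((θ + δ ^ 2) * δ ^ 2)) := by gcongr
    _ ≤ (C + G * C) * ((θ + δ ^ 2) * δ ^ 2) := by
      rw [← mul_assoc]
      gcongr
      exact le_add_of_nonneg_left hC.le

end SteadyComparison

section TrackingCost

variable {n m N : ℕ} {Q : Matrix (Fin n) (Fin n) ℝ} {R : Matrix (Fin m) (Fin m) ℝ}

/-- The tracking part of the cost of `N` steps, as a function of the deviations `x` and `v` of
state and input from the artificial steady state. -/
def trackingCost (Q : Matrix (Fin n) (Fin n) ℝ) (R : Matrix (Fin m) (Fin m) ℝ) (N : ℕ)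
    (x : ℕ → Fin n → ℝ) (v : ℕ → Fin m → ℝ) : ℝ :=
  ∑ k ∈ Finset.range N, (qn Q (x k) + qn R (v k))

theorem stageCost_nonneg (hQ : Q.PosDef) (hR : R.PosDef) (x : Fin n → ℝ) (v : Fin m → ℝ) :
    0 ≤ qn Q x + qn R v :=
  add_nonneg (qn_nonneg hQ x) (qn_nonneg hR v)

theorem trackingCost_nonneg (hQ : Q.PosDef) (hR : R.PosDef) (N : ℕ) (x : ℕ → Fin n → ℝ)
    (v : ℕ → Fin m → ℝ) : 0 ≤ trackingCost Q R N x v :=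
  Finset.sum_nonneg fun _ _ => stageCost_nonneg hQ hR _ _

theorem stageCost_le_trackingCost (hQ : Q.PosDef) (hR : R.PosDef) (x : ℕ → Fin n → ℝ)
    (v : ℕ → Fin m → ℝ) {k : ℕ} (hk : k < N) :
    qn Q (x k) + qn R (v k) ≤ trackingCost Q R N x v :=
  Finset.single_le_sum (f := fun k => qn Q (x k) + qn R (v k))
    (fun _ _ => stageCost_nonneg hQ hR _ _) (Finset.mem_range.2 hk)

theorem trackingCost_zero : trackingCost Q R N 0 0 = 0 := by
  simp [trackingCost, qn_zero]

theorem trackingCost_add_steps (j d : ℕ) (x : ℕ → Fin n → ℝ) (v : ℕ → Fin m → ℝ) :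
    trackingCost Q R (j + d) x v =
      trackingCost Q R j x v + trackingCost Q R d (fun k => x (j + k)) fun k => v (j + k) :=
  Finset.sum_range_add _ j d

theorem trackingCost_add_le (hQ : Q.PosDef) (hR : R.PosDef) {κ : ℝ} (hκ : 0 < κ)
    (x e : ℕ → Fin n → ℝ) (v c : ℕ → Fin m → ℝ) :
    trackingCost Q R N (x + e) (v + c) ≤
      (1 + κ) * trackingCost Q R N x v + (1 + κ⁻¹) * trackingCost Q R N e c := by
  simp only [trackingCost, Finset.mul_sum, ← Finset.sum_add_distrib]
  refine Finset.sum_le_sum fun k _ => ?_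
  calc qn Q (x k + e k) + qn R (v k + c k)
      ≤ ((1 + κ) * qn Q (x k) + (1 + κ⁻¹) * qn Q (e k)) +
          ((1 + κ) * qn R (v k) + (1 + κ⁻¹) * qn R (c k)) :=
        add_le_add (qn_add_le hQ hκ _ _) (qn_add_le hR hκ _ _)
    _ = _ := by ring

theorem exists_trackingCost_le (Q : Matrix (Fin n) (Fin n) ℝ) (R : Matrix (Fin m) (Fin m) ℝ)
    (N : ℕ) :
    ∃ H > 0, ∀ (x : ℕ → Fin n → ℝ) (v : ℕ → Fin m → ℝ) (η : ℝ), (∀ k ≤ N, ‖x k‖ ≤ η) →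
      (∀ k, ‖v k‖ ≤ η) → trackingCost Q R N x v ≤ H * η ^ 2 := by
  obtain ⟨HQ, hHQ, hQ⟩ := exists_qn_le Q
  obtain ⟨HR, hHR, hR⟩ := exists_qn_le R
  refine ⟨(N + 1) * (HQ + HR), by positivity, fun x v η hx hv => ?_⟩
  calc trackingCost Q R N x v ≤ ∑ _k ∈ Finset.range N, (HQ + HR) * η ^ 2 := by
        refine Finset.sum_le_sum fun k hk => ?_
        rw [add_mul]
        exact add_le_add
          ((hQ _).trans (by gcongr; exact hx k (Finset.mem_range.1 hk).le))
          ((hR _).trans (by gcongr; exact hv k))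
    _ = N * ((HQ + HR) * η ^ 2) := by rw [Finset.sum_const, Finset.card_range, nsmul_eq_mul]
    _ ≤ (N + 1) * (HQ + HR) * η ^ 2 := by
        rw [mul_assoc]
        gcongr
        exact le_add_of_nonneg_right zero_le_one

theorem exists_norm_le_of_trackingCost_le (hQ : Q.PosDef) (hR : R.PosDef) :
    ∃ C > 0, ∀ (N : ℕ) (x : ℕ → Fin n → ℝ) (v : ℕ → Fin m → ℝ) (δ : ℝ), 0 ≤ δ →
      trackingCost Q R N x v ≤ δ ^ 2 → ∀ k < N, ‖x k‖ ≤ C * δ ∧ ‖v k‖ ≤ C * δ := by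
  obtain ⟨cQ, hcQ, hQ'⟩ := exists_norm_le_of_qn_le_sq hQ
  obtain ⟨cR, _, hR'⟩ := exists_norm_le_of_qn_le_sq hR
  refine ⟨max cQ cR, lt_max_of_lt_left hcQ, fun N x v δ hδ hcost k hk => ?_⟩
  have hstage := (stageCost_le_trackingCost hQ hR x v hk).trans hcost
  constructor
  · refine (hQ' _ δ hδ ((le_add_of_nonneg_right (qn_nonneg hR _)).trans hstage)).trans ?_
    gcongr
    exact le_max_left _ _
  · refine (hR' _ δ hδ ((le_add_of_nonneg_left (qn_nonneg hQ _)).trans hstage)).trans ?_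
    gcongr
    exact le_max_right _ _

end TrackingCost

section ShiftedTail

variable {E : Type*}

/-- The sequence `z j, …, z (j + d - 1), 0, 0, …`: the shifted input and state deviations that an
MPC candidate reuses after `j` steps have been applied. -/
def shiftedTail [Zero E] (z : ℕ → E) (j d k : ℕ) : E := if k < d then z (j + k) else 0

theorem shiftedTail_of_le [Zero E] {z : ℕ → E} {j d k : ℕ} (hz : z (j + d) = 0) (hk : k ≤ d) :
    shiftedTail z j d k = z (j + k) := by
  rcases hk.lt_or_eq with hlt | rfl
  · exact if_pos hlt
  · rw [shiftedTail, if_neg (lt_irrefl _), hz]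

theorem norm_shiftedTail_le [SeminormedAddGroup E] {z : ℕ → E} {j d : ℕ} {ε : ℝ} (hε : 0 ≤ ε)
    (hz : ∀ k < j + d, ‖z k‖ ≤ ε) (k : ℕ) : ‖shiftedTail z j d k‖ ≤ ε := by
  unfold shiftedTail
  split_ifs with hk
  · exact hz _ (by omega)
  · rwa [norm_zero]

theorem trackingCost_shiftedTail {n m : ℕ} (Q : Matrix (Fin n) (Fin n) ℝ)
    (R : Matrix (Fin m) (Fin m) ℝ) (x : ℕ → Fin n → ℝ) (v : ℕ → Fin m → ℝ) (j d : ℕ) :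
    trackingCost Q R (j + d) (shiftedTail x j d) (shiftedTail v j d) =
      trackingCost Q R d (fun k => x (j + k)) fun k => v (j + k) := by
  unfold trackingCost
  rw [← Finset.sum_subset (Finset.range_mono (Nat.le_add_left d j)) fun k _ hk => ?_]
  · refine Finset.sum_congr rfl fun k hk => ?_
    simp only [shiftedTail, if_pos (Finset.mem_range.1 hk)]
  · simp only [shiftedTail, if_neg (Finset.mem_range.not.1 hk), qn_zero, add_zero]

theorem norm_shiftedTail_defect_le {F : Type*} [NormedAddCommGroup E] [NormedSpace ℝ E]
    [AddCommGroup F] [Module ℝ F] {A A' : E →L[ℝ] E} {B : F →ₗ[ℝ] E} {x : ℕ → E} {v : ℕ → F}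
    {j d : ℕ} {ε : ℝ} (hε : 0 ≤ ε) (hstep : ∀ k < j + d, x (k + 1) = A (x k) + B (v k))
    (hlast : x (j + d) = 0) (hx : ∀ k ≤ j + d, ‖x k‖ ≤ ε) (k : ℕ) :
    ‖A' (shiftedTail x j d k) + B (shiftedTail v j d k) - shiftedTail x j d (k + 1)‖ ≤
      ‖A' - A‖ * ε := by
  rcases lt_or_ge k d with hk | hk
  · have hdefect : A' (x (j + k)) + B (v (j + k)) - (A (x (j + k)) + B (v (j + k))) =
        (A' - A) (x (j + k)) := by
      rw [_root_.sub_apply]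
      abel
    rw [shiftedTail_of_le hlast hk.le, shiftedTail_of_le (k := k + 1) hlast hk, shiftedTail,
      if_pos hk, ← add_assoc, hstep _ (by omega), hdefect]
    exact (A' - A).le_opNorm_of_le (hx _ (by omega))
  · simp only [shiftedTail, if_neg hk.not_gt, if_neg (hk.trans k.le_succ).not_gt, map_zero,
      add_zero, sub_zero, norm_zero]
    positivity

end ShiftedTail

section Prediction

variable {n m p N : ℕ} {f0 : (Fin n → ℝ) → Fin n → ℝ} {h0 : (Fin n → ℝ) → Fin p → ℝ}
  {B : Matrix (Fin n) (Fin m) ℝ} {D : Matrix (Fin p) (Fin m) ℝ} {U Us : Set (Fin m → ℝ)}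
  {Q : Matrix (Fin n) (Fin n) ℝ} {R : Matrix (Fin m) (Fin m) ℝ} {S : Matrix (Fin p) (Fin p) ℝ}
  {yr : Fin p → ℝ} {q xs : Fin n → ℝ} {xb : ℕ → Fin n → ℝ} {ub : ℕ → Fin m → ℝ}
  {us : Fin m → ℝ} {ys : Fin p → ℝ} {ε : ℝ}

/-- Along the linearization at `q`, the inputs `ub` steer `q` to the steady state `(xs, us)` in
`N` steps, with all deviations from that steady state bounded by `ε`. -/
structure SteadyApproach (f0 : (Fin n → ℝ) → Fin n → ℝ) (B : Matrix (Fin n) (Fin m) ℝ)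
    (Us : Set (Fin m → ℝ)) (N : ℕ) (q : Fin n → ℝ) (xb : ℕ → Fin n → ℝ) (ub : ℕ → Fin m → ℝ)
    (xs : Fin n → ℝ) (us : Fin m → ℝ) (ε : ℝ) : Prop where
  mem_Zlin : (xs, us) ∈ Zlin f0 B Us q
  step : ∀ k < N, xb (k + 1) = flin f0 B q (xb k) (ub k)
  start : xb 0 = q
  last : xb N = xs
  norm_state_sub_le : ∀ k ≤ N, ‖xb k - xs‖ ≤ ε
  norm_input_sub_le : ∀ k < N, ‖ub k - us‖ ≤ ε

namespace SteadyApproach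

theorem step_sub (h : SteadyApproach f0 B Us N q xb ub xs us ε) {k : ℕ} (hk : k < N) :
    xb (k + 1) - xs = fderiv ℝ f0 q (xb k - xs) + B *ᵥ (ub k - us) :=
  (congrArg₂ (· - ·) (h.step k hk) h.mem_Zlin.2).trans (hlin_sub f0 B q xs (xb k) us (ub k))

theorem nonneg (h : SteadyApproach f0 B Us N q xb ub xs us ε) : 0 ≤ ε :=
  (norm_nonneg _).trans (h.norm_state_sub_le 0 N.zero_le)

theorem norm_start_sub_le (h : SteadyApproach f0 B Us N q xb ub xs us ε) : ‖q - xs‖ ≤ ε :=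
  h.start ▸ h.norm_state_sub_le 0 N.zero_le

theorem norm_start_le (h : SteadyApproach f0 B Us N q xb ub xs us ε) : ‖q‖ ≤ ‖xs‖ + ε :=
  (norm_le_norm_add_norm_sub' q xs).trans (add_le_add_right h.norm_start_sub_le _)

theorem norm_state_sub_start_le (h : SteadyApproach f0 B Us N q xb ub xs us ε) {k : ℕ}
    (hk : k ≤ N) : ‖xb k - q‖ ≤ 2 * ε := calc
  ‖xb k - q‖ ≤ ‖xb k - xs‖ + ‖xs - q‖ := norm_sub_le_norm_sub_add_norm_sub _ _ _
  _ ≤ ε + ε := add_le_add (h.norm_state_sub_le k hk) (norm_sub_rev q xs ▸ h.norm_start_sub_le)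
  _ = 2 * ε := (two_mul ε).symm

/-- As long as the error is at most `1`, the nonlinear trajectory stays in the set `s` on which
the Taylor bounds hold, so that the error obeys an affine recursion. -/
theorem norm_rollout_sub_le (h : SteadyApproach f0 B Us N q xb ub xs us ε)
    {s : Set (Fin n → ℝ)} {M : ℝ} (hf : TaylorBoundOn f0 s M)
    (hs : ∀ k ≤ N, Metric.closedBall (xb k) 1 ⊆ s)
    (hsmall : (1 + M) ^ N * (M * (2 * ε) ^ 2) ≤ 1) :
    ∀ k ≤ N, ‖rollout f0 B q ub k - xb k‖ ≤ (1 + M) ^ k * (M * (2 * ε) ^ 2) := by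
  have hM := hf.nonneg
  have hxb : ∀ k ≤ N, xb k ∈ s := fun k hk => hs k hk (Metric.mem_closedBall_self zero_le_one)
  have hq : q ∈ s := h.start ▸ hxb 0 N.zero_le
  refine le_one_add_pow_mul_of_guarded_step hM (by positivity) hsmall ?_ fun k hk hguard => ?_
  · rw [rollout, h.start, sub_self, norm_zero]
    positivity
  have hroll : rollout f0 B q ub k ∈ s := hs k hk.le (mem_closedBall_iff_norm.2 hguard)
  have hsplit : rollout f0 B q ub (k + 1) - xb (k + 1) =
      (f0 (rollout f0 B q ub k) - f0 (xb k)) + (f0 (xb k) - firstOrderTaylor f0 q (xb k)) := by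
    rw [rollout, fdyn, h.step k hk, flin_eq]
    abel
  calc ‖rollout f0 B q ub (k + 1) - xb (k + 1)‖
      ≤ ‖f0 (rollout f0 B q ub k) - f0 (xb k)‖ + ‖f0 (xb k) - firstOrderTaylor f0 q (xb k)‖ :=
        hsplit ▸ norm_add_le _ _
    _ ≤ M * ‖rollout f0 B q ub k - xb k‖ + M * (2 * ε) ^ 2 := by
        refine add_le_add (hf.norm_sub_le (hxb k hk.le) hroll)
          ((hf.norm_sub_firstOrderTaylor_le hq (hxb k hk.le)).trans ?_)
        gcongr
        exact h.norm_state_sub_start_le hk.le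

end SteadyApproach

theorem Vfun_eq_of_MPCopt (h : MPCopt f0 h0 B D U Us Q R S yr N q xb ub xs us ys) :
    Vfun f0 h0 B D U Us Q R S yr N q =
      trackingCost Q R N (fun k => xb k - xs) (fun k => ub k - us) +
        (steadyCost h0 D S yr q xs us - Jeqlin f0 h0 B D Us S yr q) := by
  have hleast : IsLeast {c : ℝ | ∃ xb ub xs us ys, MPCfeas f0 h0 B D U Us N q xb ub xs us ys ∧
      c = MPCcost Q R S yr N xb ub xs us ys} (MPCcost Q R S yr N xb ub xs us ys) := by
    refine ⟨⟨xb, ub, xs, us, ys, h.1, rfl⟩, ?_⟩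
    rintro c ⟨xb', ub', xs', us', ys', hfeas, rfl⟩
    exact h.2 _ _ _ _ _ hfeas
  obtain ⟨-, -, -, -, -, rfl⟩ := h.1
  rw [Vfun, Jstar, hleast.csInf_eq, ← add_sub_assoc]
  rfl

theorem Vfun_nonneg_of_MPCopt (hQ : Q.PosDef) (hR : R.PosDef) (hS : S.PosDef)
    (h : MPCopt f0 h0 B D U Us Q R S yr N q xb ub xs us ys) :
    0 ≤ Vfun f0 h0 B D U Us Q R S yr N q := by
  rw [Vfun_eq_of_MPCopt h]
  exact add_nonneg (trackingCost_nonneg hQ hR N _ _)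
    (sub_nonneg.2 (Jeqlin_le_steadyCost hS h.1.2.2.2.2.1))

theorem Vfun_le_of_MPCfeas (hQ : Q.PosDef) (hR : R.PosDef) (hS : S.PosDef)
    (h : MPCfeas f0 h0 B D U Us N q xb ub xs us ys) :
    Vfun f0 h0 B D U Us Q R S yr N q ≤
      trackingCost Q R N (fun k => xb k - xs) (fun k => ub k - us) +
        (steadyCost h0 D S yr q xs us - Jeqlin f0 h0 B D Us S yr q) := by
  have hle : Jstar f0 h0 B D U Us Q R S yr N q ≤ MPCcost Q R S yr N xb ub xs us ys := by
    refine csInf_le ⟨0, ?_⟩ ⟨xb, ub, xs, us, ys, h, rfl⟩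
    rintro c ⟨xb', ub', xs', us', ys', -, rfl⟩
    exact add_nonneg (trackingCost_nonneg hQ hR N _ _) (qn_nonneg hS _)
  obtain ⟨-, -, -, -, -, rfl⟩ := h
  rw [Vfun, ← add_sub_assoc]
  exact sub_le_sub_right hle _

theorem exists_steadyApproach_of_MPCopt (hQ : Q.PosDef) (hR : R.PosDef) (hS : S.PosDef) :
    ∃ C > 0, ∀ {q xb ub xs us ys} {δ : ℝ}, 0 ≤ δ →
      MPCopt f0 h0 B D U Us Q R S yr N q xb ub xs us ys →
      Vfun f0 h0 B D U Us Q R S yr N q ≤ δ ^ 2 →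
      SteadyApproach f0 B Us N q xb ub xs us (C * δ) ∧
        steadyCost h0 D S yr q xs us - Jeqlin f0 h0 B D Us S yr q ≤ δ ^ 2 := by
  obtain ⟨C, hC, hnorm⟩ := exists_norm_le_of_trackingCost_le hQ hR
  refine ⟨C, hC, fun {q xb ub xs us ys δ} hδ hopt hV => ?_⟩
  rw [Vfun_eq_of_MPCopt hopt] at hV
  obtain ⟨⟨hstep, hstart, hlast, -, hmem, -⟩, -⟩ := hopt
  have htrack := trackingCost_nonneg hQ hR N (fun k => xb k - xs) fun k => ub k - us
  have hgap := sub_nonneg.2 (Jeqlin_le_steadyCost (h0 := h0) (D := D) (yr := yr) hS hmem)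
  have hdev := hnorm N (fun k => xb k - xs) (fun k => ub k - us) δ hδ (by linarith)
  refine ⟨⟨hmem, hstep, hstart, hlast, fun k hk => ?_, fun k hk => (hdev k hk).2⟩, by linarith⟩
  rcases hk.lt_or_eq with hlt | rfl
  · exact (hdev k hlt).1
  · rw [hlast, sub_self, norm_zero]
    positivity

end Prediction

section Candidate

variable {n m p N : ℕ} {f0 : (Fin n → ℝ) → Fin n → ℝ} {h0 : (Fin n → ℝ) → Fin p → ℝ}
  {B : Matrix (Fin n) (Fin m) ℝ} {D : Matrix (Fin p) (Fin m) ℝ} {U Us : Set (Fin m → ℝ)}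
  {Q : Matrix (Fin n) (Fin n) ℝ} {R : Matrix (Fin m) (Fin m) ℝ} {S : Matrix (Fin p) (Fin p) ℝ}
  {yr : Fin p → ℝ} {μ a r : ℝ}

theorem exists_add_mem_of_subset_interior {E : Type*} [SeminormedAddCommGroup E] {s t : Set E}
    (hs : IsCompact s) (h : s ⊆ interior t) : ∃ r > 0, ∀ x ∈ s, ∀ v, ‖v‖ ≤ r → x + v ∈ t := by
  obtain ⟨r, hr, hrt⟩ := hs.exists_cthickening_subset_open isOpen_interior h
  refine ⟨r, hr, fun x hx v hv => interior_subset (hrt ?_)⟩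
  refine Metric.mem_cthickening_of_dist_le _ x r _ hx ?_
  rwa [dist_eq_norm, add_sub_cancel_left]

theorem MPCfeas_of_deviation {q xs : Fin n → ℝ} {us : Fin m → ℝ} {z : ℕ → Fin n → ℝ}
    {v : ℕ → Fin m → ℝ} (hmem : (xs, us) ∈ Zlin f0 B Us q) (hstart : z 0 = q - xs)
    (hstep : ∀ k < N, z (k + 1) = fderiv ℝ f0 q (z k) + B *ᵥ v k) (hlast : z N = 0)
    (hU : ∀ k < N, us + v k ∈ U) :
    MPCfeas f0 h0 B D U Us N q (fun k => xs + z k) (fun k => us + v k) xs us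
      (hlin h0 D q xs us) := by
  refine ⟨fun k hk => ?_, ?_, ?_, hU, hmem, rfl⟩
  · have hdiff := hlin_sub f0 B q xs (xs + z k) us (us + v k)
    rw [add_sub_cancel_left, add_sub_cancel_left, ← hstep k hk, sub_eq_iff_eq_add'] at hdiff
    exact (congrArg (· + z (k + 1)) hmem.2).trans hdiff.symm
  · simp only [hstart, add_sub_cancel]
  · simp only [hlast, add_zero]

/-- An approximate trajectory of deviations is corrected to an exact one by a deadbeat input. -/
theorem exists_deadbeat_candidate (hN : n ≤ N) (hμ : 0 < μ) (hA3 : A3holds f0 B μ) (ha : 0 ≤ a)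
    (hQ : Q.PosDef) (hR : R.PosDef) (hr : ∀ u ∈ Us, ∀ v, ‖v‖ ≤ r → u + v ∈ U) :
    ∃ K > 0, ∀ {q xs us}, ‖fderiv ℝ f0 q‖ ≤ a → (xs, us) ∈ Zlin f0 B Us q →
      ∀ (x : ℕ → Fin n → ℝ) (v : ℕ → Fin m → ℝ) (η : ℝ), ‖q - xs - x 0‖ ≤ η → x N = 0 →
      (∀ k, ‖fderiv ℝ f0 q (x k) + B *ᵥ v k - x (k + 1)‖ ≤ η) → (∀ k, ‖v k‖ + K * η ≤ r) →
      ∃ xb ub, MPCfeas f0 h0 B D U Us N q xb ub xs us (hlin h0 D q xs us) ∧ ∀ κ > 0,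
        trackingCost Q R N (fun k => xb k - xs) (fun k => ub k - us) ≤
          (1 + κ) * trackingCost Q R N x v + (1 + κ⁻¹) * (K * η ^ 2) := by
  obtain ⟨K, hK, hdeadbeat⟩ := exists_deadbeat_bound B hN hμ ha
  obtain ⟨H, _, hcost⟩ := exists_trackingCost_le Q R N
  refine ⟨max K (H * K ^ 2), lt_max_of_lt_left hK,
    fun {q xs us} hq hmem x v η hstart hlast hdefect hinput => ?_⟩
  have hη : 0 ≤ η := (norm_nonneg _).trans hstart
  have hA : ∀ w, ‖jac f0 q *ᵥ w‖ ≤ a * ‖w‖ := fun w => by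
    rw [jac_mulVec]
    exact (fderiv ℝ f0 q).le_of_opNorm_le hq w
  obtain ⟨c, heN, he, hc⟩ := hdeadbeat (jac f0 q) hA (hA3 q) _ _ η hstart hdefect
  set e := drivenOrbit (jac f0 q).mulVecLin (q - xs - x 0)
    fun k => B *ᵥ c k + (fderiv ℝ f0 q (x k) + B *ᵥ v k - x (k + 1))
  have hfeas : MPCfeas f0 h0 B D U Us N q (fun k => xs + (x + e) k) (fun k => us + (v + c) k)
      xs us (hlin h0 D q xs us) := by
    refine MPCfeas_of_deviation hmem (add_sub_cancel _ _) (fun k _ => ?_) ?_ fun k _ => ?_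
    · have he_succ : e (k + 1) = fderiv ℝ f0 q (e k) +
          (B *ᵥ c k + (fderiv ℝ f0 q (x k) + B *ᵥ v k - x (k + 1))) :=
        congrArg (· + _) (jac_mulVec f0 q (e k))
      simp only [Pi.add_apply, he_succ, map_add, Matrix.mulVec_add]
      abel
    · rw [Pi.add_apply, hlast, heN, add_zero]
    · refine hr us hmem.1 _ ((norm_add_le _ _).trans (le_trans ?_ (hinput k)))
      gcongr
      exact (hc k).trans (by gcongr; exact le_max_left _ _)
  refine ⟨_, _, hfeas, fun κ hκ => ?_⟩
  simp only [add_sub_cancel_left]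
  refine (trackingCost_add_le hQ hR hκ x e v c).trans ?_
  gcongr
  calc trackingCost Q R N e c ≤ H * K ^ 2 * η ^ 2 := by
        rw [mul_assoc, ← mul_pow]
        exact hcost e c (K * η) he hc
    _ ≤ max K (H * K ^ 2) * η ^ 2 := by gcongr; exact le_max_right _ _

theorem qn_zero_step_le_trackingCost (hQ : Q.PosDef) (hR : R.PosDef) (x : ℕ → Fin n → ℝ)
    (v : ℕ → Fin m → ℝ) : qn Q (x 0) ≤ trackingCost Q R n x v := by
  rcases n.eq_zero_or_pos with rfl | hn
  · rw [Subsingleton.elim (x 0) 0, qn_zero]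
    exact trackingCost_nonneg hQ hR 0 x v
  · exact (le_add_of_nonneg_right (qn_nonneg hR _)).trans (stageCost_le_trackingCost hQ hR x v hn)

/-- The deadbeat candidate shows that the optimal tracking cost is at most proportional to the
squared initial deviation, which is already paid in the first step. -/
theorem exists_trackingCost_le_mul_of_MPCopt (hN : n ≤ N) (hμ : 0 < μ) (hA3 : A3holds f0 B μ)
    (ha : 0 ≤ a) (hQ : Q.PosDef) (hR : R.PosDef) (hr0 : 0 < r)
    (hr : ∀ u ∈ Us, ∀ v, ‖v‖ ≤ r → u + v ∈ U) :
    ∃ c ≥ 1, ∃ ρ > 0, ∀ {q xb ub xs us ys}, ‖fderiv ℝ f0 q‖ ≤ a →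
      MPCopt f0 h0 B D U Us Q R S yr N q xb ub xs us ys → ‖q - xs‖ ≤ ρ →
      trackingCost Q R N (fun k => xb k - xs) (fun k => ub k - us) ≤
        c * trackingCost Q R n (fun k => xb k - xs) fun k => ub k - us := by
  obtain ⟨K, hK, hcand⟩ := exists_deadbeat_candidate (h0 := h0) (D := D) hN hμ hA3 ha hQ hR hr
  obtain ⟨l, hl, hQl⟩ := exists_le_qn hQ
  refine ⟨2 * K / l + 1, le_add_of_nonneg_left (by positivity), r / K, by positivity,
    fun {q xb ub xs us ys} hq hopt hρ => ?_⟩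
  obtain ⟨-, hstart, -, -, hmem, rfl⟩ := hopt.1
  obtain ⟨xb', ub', hfeas, hcost⟩ := hcand hq hmem 0 0 ‖q - xs‖ (by simp) rfl (by simp)
    fun _ => by simpa using (le_div_iff₀' hK).1 hρ
  have hle := le_of_add_le_add_right (hopt.2 _ _ _ _ _ hfeas)
  calc trackingCost Q R N (fun k => xb k - xs) (fun k => ub k - us)
      ≤ 2 * K * ‖q - xs‖ ^ 2 := by
        refine (hle.trans (hcost 1 one_pos)).trans_eq ?_
        rw [trackingCost_zero]
        ring
    _ ≤ (2 * K / l + 1) * (l * ‖q - xs‖ ^ 2) := by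
        rw [add_mul, ← mul_assoc, div_mul_cancel₀ _ hl.ne']
        exact le_add_of_nonneg_right (by positivity)
    _ ≤ (2 * K / l + 1) * qn Q (q - xs) := by gcongr; exact hQl _
    _ ≤ _ := by
        gcongr
        exact hstart ▸ qn_zero_step_le_trackingCost hQ hR (fun k => xb k - xs) fun k => ub k - us

end Candidate

section Successor

variable {n m p N : ℕ} {f0 : (Fin n → ℝ) → Fin n → ℝ} {h0 : (Fin n → ℝ) → Fin p → ℝ}
  {B : Matrix (Fin n) (Fin m) ℝ} {D : Matrix (Fin p) (Fin m) ℝ} {U Us : Set (Fin m → ℝ)}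
  {Q : Matrix (Fin n) (Fin n) ℝ} {R : Matrix (Fin m) (Fin m) ℝ} {S : Matrix (Fin p) (Fin p) ℝ}
  {yr : Fin p → ℝ} {s : Set (Fin n → ℝ)} {M M₁ M₂ μ r σs σl c : ℝ}
  {𝓑 : Set ((Fin n → ℝ) × (Fin m → ℝ))}

theorem SteadyApproach.mono {q xs : Fin n → ℝ} {xb : ℕ → Fin n → ℝ} {ub : ℕ → Fin m → ℝ}
    {us : Fin m → ℝ} {ε ε' : ℝ} (h : SteadyApproach f0 B Us N q xb ub xs us ε) (hε : ε ≤ ε') :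
    SteadyApproach f0 B Us N q xb ub xs us ε' :=
  { h with
    norm_state_sub_le := fun k hk => (h.norm_state_sub_le k hk).trans hε
    norm_input_sub_le := fun k hk => (h.norm_input_sub_le k hk).trans hε }

theorem SteadyApproach.norm_tail_defect_le {j d : ℕ} {q q' xs : Fin n → ℝ} {xb : ℕ → Fin n → ℝ}
    {ub : ℕ → Fin m → ℝ} {us : Fin m → ℝ} {ε : ℝ}
    (h : SteadyApproach f0 B Us (j + d) q xb ub xs us ε) (hf : TaylorBoundOn f0 s M)
    (hq : q ∈ s) (hq' : q' ∈ s) (hqq : ‖q' - q‖ ≤ ε) (k : ℕ) :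
    ‖fderiv ℝ f0 q' (shiftedTail (fun i => xb i - xs) j d k) +
        B *ᵥ shiftedTail (fun i => ub i - us) j d k -
        shiftedTail (fun i => xb i - xs) j d (k + 1)‖ ≤ M * ε ^ 2 := calc
  _ ≤ ‖fderiv ℝ f0 q' - fderiv ℝ f0 q‖ * ε :=
    norm_shiftedTail_defect_le (B := B.mulVecLin) h.nonneg (fun k hk => h.step_sub hk)
      (sub_eq_zero.2 h.last) h.norm_state_sub_le k
  _ ≤ M * ε * ε := by
    gcongr
    exacts [h.nonneg, (hf.norm_fderiv_sub_le q hq q' hq').trans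
      (mul_le_mul_of_nonneg_left hqq hf.nonneg)]
  _ = M * ε ^ 2 := by ring

theorem exists_rollout_bounds (B : Matrix (Fin n) (Fin m) ℝ) (Us : Set (Fin m → ℝ)) (N : ℕ)
    {b : ℝ} (hc : 0 < c) (hf : TaylorBoundOn f0 (Metric.closedBall 0 (b + c + 1)) M) :
    ∃ C > 0, ∃ δ₀ > 0, ∀ {q xb ub xs us} {δ : ℝ}, 0 ≤ δ → δ ≤ δ₀ → ‖xs‖ ≤ b →
      SteadyApproach f0 B Us N q xb ub xs us (c * δ) → ∀ k ≤ N,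
        rollout f0 B q ub k ∈ Metric.closedBall 0 (b + c + 1) ∧
        ‖rollout f0 B q ub k - xb k‖ ≤ C * δ ^ 2 ∧ ‖rollout f0 B q ub k - q‖ ≤ C * δ := by
  have hM := hf.nonneg
  set C₁ : ℝ := (1 + M) ^ N * (M * (2 * c) ^ 2) with hC₁
  refine ⟨C₁ + 2 * c, by positivity, min 1 (C₁ + 1)⁻¹, by positivity,
    fun {q xb ub xs us δ} hδ hδ₀ hxs h k hk => ?_⟩
  have hδ1 : δ ≤ 1 := hδ₀.trans (min_le_left _ _)
  have hsq : C₁ * δ ^ 2 ≤ C₁ * δ := by gcongr; nlinarith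
  have hC₁δ : C₁ * δ ≤ 1 := calc
    C₁ * δ ≤ (C₁ + 1) * (C₁ + 1)⁻¹ := by
      gcongr
      exacts [le_add_of_nonneg_right zero_le_one, hδ₀.trans (min_le_right _ _)]
    _ = 1 := mul_inv_cancel₀ (by positivity)
  have hcδ : c * δ ≤ c := mul_le_of_le_one_right hc.le hδ1
  have hxb : ∀ j ≤ N, ‖xb j‖ ≤ b + c := fun j hj => by
    linarith [norm_sub_norm_le (xb j) xs, h.norm_state_sub_le j hj]
  have hball : ∀ j ≤ N, Metric.closedBall (xb j) 1 ⊆ Metric.closedBall 0 (b + c + 1) :=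
    fun j hj => Metric.closedBall_subset_closedBall'
      (by linarith [hxb j hj, dist_zero_right (xb j)])
  have hsplit : (1 + M) ^ N * (M * (2 * (c * δ)) ^ 2) = C₁ * δ ^ 2 := by rw [hC₁]; ring
  have herr : ‖rollout f0 B q ub k - xb k‖ ≤ C₁ * δ ^ 2 :=
    (h.norm_rollout_sub_le hf hball (by linarith) k hk).trans <| hsplit ▸
      mul_le_mul_of_nonneg_right (pow_le_pow_right₀ (by linarith) hk) (by positivity)
  refine ⟨hball k hk (mem_closedBall_iff_norm.2 (by linarith)), herr.trans ?_, ?_⟩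
  · gcongr
    exact le_add_of_nonneg_right (by positivity)
  · linarith [norm_sub_le_norm_sub_add_norm_sub (rollout f0 B q ub k) (xb k) q,
      h.norm_state_sub_start_le hk]

/-- The target of the candidate lies a fraction `t` of the way from the transferred steady state
to the optimal one; by convexity this gains the fraction `t` of the excess cost. -/
theorem exists_steady_target (hUs : IsClosed Us) (hUsconv : Convex ℝ Us) (hS : S.PosDef)
    (hf : TaylorBoundOn f0 s M₁) (hh : TaylorBoundOn h0 s M₂)
    (hσs : 0 < σs) (hA2 : A2holds f0 h0 B D σs) (hσl : 0 < σl) (hA4 : A4holds f0 σl)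
    (h𝓑 : IsCompact 𝓑) (hA5 : ∀ q : Fin n → ℝ, Zlin f0 B Us q ⊆ 𝓑) (hc : 0 < c) :
    ∃ C > 0, ∀ q ∈ s, ∀ q' ∈ s, ∀ x u, (x, u) ∈ Zlin f0 B Us q → ∀ δ ∈ Set.Icc (0 : ℝ) 1,
      ∀ θ ∈ Set.Icc (0 : ℝ) 1, ∀ t ∈ Set.Icc (0 : ℝ) 1, ‖q' - q‖ ≤ c * δ → ‖x - q‖ ≤ c * δ →
      steadyCost h0 D S yr q x u - Jeqlin f0 h0 B D Us S yr q ≤ δ ^ 2 →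
      steadyCost h0 D S yr q x u ≤ θ ^ 2 → Jeqlin f0 h0 B D Us S yr q' ≤ θ ^ 2 →
      ∃ x' u', (x', u') ∈ Zlin f0 B Us q' ∧ ‖x' - x‖ ≤ C * (δ ^ 2 + t * δ) ∧
        steadyCost h0 D S yr q' x' u' - Jeqlin f0 h0 B D Us S yr q' ≤
          (1 - t) * (steadyCost h0 D S yr q x u - Jeqlin f0 h0 B D Us S yr q) +
            C * ((θ + δ ^ 2) * δ ^ 2) := by
  obtain ⟨C, hC, hcompare⟩ := exists_steady_compare (yr := yr) hUs hUsconv hS hf hh hσs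
    hA2 hσl hA4 h𝓑 hA5 hc
  refine ⟨C, hC, fun q hq q' hq' x u hx δ hδ θ hθ t ht hqq hxq hgap hcost hJ' => ?_⟩
  obtain ⟨xp, xm, um, hxp, hxm, hmin, hdist, hdist_min, hgap'⟩ :=
    hcompare q hq q' hq' x u hx δ hδ θ hθ hqq hxq hgap hcost hJ'
  refine ⟨_, _, add_smul_sub_mem_Zlin hUsconv hxp hxm ht, ?_, ?_⟩
  · calc ‖xp + t • (xm - xp) - x‖ = ‖(xp - x) + t • (xm - xp)‖ := by rw [add_sub_right_comm]
      _ ≤ ‖xp - x‖ + t * ‖xm - xp‖ := norm_add_le_of_le le_rfl (norm_smul_of_nonneg ht.1 _).le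
      _ ≤ C * δ ^ 2 + t * (C * δ) := add_le_add hdist (mul_le_mul_of_nonneg_left hdist_min ht.1)
      _ = C * (δ ^ 2 + t * δ) := by ring
  · have hconv : 0 ≤ t * (1 - t) * qn S (hlin h0 D q' xm um - hlin h0 D q' xp u) :=
      mul_nonneg (mul_nonneg ht.1 (sub_nonneg.2 ht.2)) (qn_nonneg hS _)
    have hscaled := mul_le_mul_of_nonneg_left hgap' (sub_nonneg.2 ht.2)
    have herr : 0 ≤ t * (C * ((θ + δ ^ 2) * δ ^ 2)) :=
      mul_nonneg ht.1 (mul_nonneg hC.le (mul_nonneg (add_nonneg hθ.1 (sq_nonneg δ)) (sq_nonneg δ)))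
    rw [steadyCost_add_smul_sub, hmin]
    linarith

theorem exists_shifted_candidate_of_mismatch {d : ℕ} (hμ : 0 < μ) (hA3 : A3holds f0 B μ)
    (hf : TaylorBoundOn f0 s M) (hQ : Q.PosDef) (hR : R.PosDef)
    (hr : ∀ u ∈ Us, ∀ v, ‖v‖ ≤ r → u + v ∈ U) :
    ∃ K > 0, ∀ q ∈ s, ∀ q' ∈ s, ∀ {xb ub xs us xs' us'} {ε η : ℝ},
      SteadyApproach f0 B Us (n + d) q xb ub xs us ε → ‖q' - q‖ ≤ ε → M * ε ^ 2 ≤ η →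
      (xs', us') ∈ Zlin f0 B Us q' → ‖q' - xb n‖ + ‖xs' - xs‖ ≤ η → ε + K * η ≤ r →
      ∃ xb' ub', MPCfeas f0 h0 B D U Us (n + d) q' xb' ub' xs' us' (hlin h0 D q' xs' us') ∧
        ∀ κ > 0, trackingCost Q R (n + d) (fun k => xb' k - xs') (fun k => ub' k - us') ≤
          (1 + κ) * trackingCost Q R d (fun k => xb (n + k) - xs) (fun k => ub (n + k) - us) +
            (1 + κ⁻¹) * (K * η ^ 2) := by
  obtain ⟨K, hK, hcand⟩ := exists_deadbeat_candidate (h0 := h0) (D := D) (n.le_add_right d) hμ hA3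
    hf.nonneg hQ hR hr
  refine ⟨K, hK, fun q hq q' hq' {xb ub xs us xs' us' ε η} h hqq hMε hmem hη hεr => ?_⟩
  set z : ℕ → Fin n → ℝ := fun k => xb k - xs
  set v : ℕ → Fin m → ℝ := fun k => ub k - us
  have hstart : ‖q' - xs' - shiftedTail z n d 0‖ ≤ η := by
    rw [shiftedTail_of_le (z := z) (sub_eq_zero.2 h.last) d.zero_le]
    calc ‖q' - xs' - (xb n - xs)‖ = ‖(q' - xb n) - (xs' - xs)‖ := by rw [sub_sub_sub_comm]
      _ ≤ η := (norm_sub_le _ _).trans hη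
  obtain ⟨xb', ub', hfeas, hcost⟩ := hcand (hf.norm_fderiv_le q' hq') hmem (shiftedTail z n d)
    (shiftedTail v n d) η hstart (if_neg (by omega))
    (fun k => (h.norm_tail_defect_le hf hq hq' hqq k).trans hMε)
    (fun k => (add_le_add_left (norm_shiftedTail_le h.nonneg h.norm_input_sub_le k) _).trans hεr)
  rw [trackingCost_shiftedTail] at hcost
  exact ⟨xb', ub', hfeas, hcost⟩

theorem exists_shifted_candidate {d : ℕ} (hc : 0 < c) (hμ : 0 < μ) (hA3 : A3holds f0 B μ)
    (hf : TaylorBoundOn f0 s M) (hQ : Q.PosDef) (hR : R.PosDef) (hr0 : 0 < r)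
    (hr : ∀ u ∈ Us, ∀ v, ‖v‖ ≤ r → u + v ∈ U) :
    ∃ C > 0, ∃ δ₀ > 0, ∀ q ∈ s, ∀ q' ∈ s, ∀ {xb ub xs us xs' us'} {δ t : ℝ},
      0 ≤ δ → δ ≤ δ₀ → t ∈ Set.Icc (0 : ℝ) 1 →
      SteadyApproach f0 B Us (n + d) q xb ub xs us (c * δ) → ‖q' - q‖ ≤ c * δ →
      ‖q' - xb n‖ ≤ c * δ ^ 2 → (xs', us') ∈ Zlin f0 B Us q' →
      ‖xs' - xs‖ ≤ c * (δ ^ 2 + t * δ) →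
      ∃ xb' ub', MPCfeas f0 h0 B D U Us (n + d) q' xb' ub' xs' us' (hlin h0 D q' xs' us') ∧
        ∀ κ > 0, trackingCost Q R (n + d) (fun k => xb' k - xs') (fun k => ub' k - us') ≤
          (1 + κ) * trackingCost Q R d (fun k => xb (n + k) - xs) (fun k => ub (n + k) - us) +
            (1 + κ⁻¹) * (C * ((δ ^ 2 + t ^ 2) * δ ^ 2)) := by
  obtain ⟨K, hK, hcand⟩ := exists_shifted_candidate_of_mismatch (h0 := h0) (D := D) (d := d) hμ
    hA3 hf hQ hR hr
  have hM := hf.nonneg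
  set G : ℝ := M * c ^ 2 + 2 * c
  refine ⟨K * G ^ 2 * 2, by positivity, min 1 (r / (c + K * (G * 2))), by positivity,
    fun q hq q' hq' {xb ub xs us xs' us' δ t} hδ hδ₀ ⟨ht0, ht1⟩ h hqq hpred hmem hshift => ?_⟩
  have hδ1 : δ ≤ 1 := hδ₀.trans (min_le_left _ _)
  have hδr := (le_div_iff₀ (by positivity)).1 (hδ₀.trans (min_le_right _ _))
  have htδ : 0 ≤ t * δ := by positivity
  set η := δ ^ 2 + t * δ with hη
  have hη_le : η ≤ 2 * δ := by nlinarith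
  have hdefect : M * (c * δ) ^ 2 ≤ G * η := calc
    M * (c * δ) ^ 2 = M * c ^ 2 * δ ^ 2 := by ring
    _ ≤ G * η := by
      gcongr
      exacts [le_add_of_nonneg_right (by positivity), le_add_of_nonneg_right htδ]
  have hstart : ‖q' - xb n‖ + ‖xs' - xs‖ ≤ G * η := by
    have hMη : 0 ≤ M * c ^ 2 * η := by positivity
    have hctδ : 0 ≤ c * (t * δ) := by positivity
    linarith
  have hinput : c * δ + K * (G * η) ≤ r := calc
    c * δ + K * (G * η) ≤ c * δ + K * (G * (2 * δ)) := by gcongr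
    _ ≤ r := by linarith
  obtain ⟨xb', ub', hfeas, hcost⟩ := hcand q hq q' hq' h hqq hdefect hmem hstart hinput
  have hη_sq : K * (G * η) ^ 2 ≤ K * G ^ 2 * 2 * ((δ ^ 2 + t ^ 2) * δ ^ 2) := calc
    K * (G * η) ^ 2 = K * G ^ 2 * (δ ^ 2 + t * δ) ^ 2 := by rw [hη]; ring
    _ ≤ K * G ^ 2 * (2 * ((δ ^ 2) ^ 2 + (t * δ) ^ 2)) := by gcongr; exact add_sq_le
    _ = _ := by ring
  refine ⟨xb', ub', hfeas, fun κ hκ => (hcost κ hκ).trans ?_⟩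
  gcongr

end Successor

section Contraction

theorem add_le_mul_of_le_mul {T₁ T₂ W V T' W' c t θ C₁ C₂ : ℝ} (hc : 1 ≤ c)
    (ht : t ∈ Set.Icc 0 (2 * c)⁻¹) (hθ : 0 ≤ θ) (hC₁ : 0 ≤ C₁) (hC₂ : 0 ≤ C₂)
    (hT : 0 ≤ T₁ + T₂) (hV : T₁ + T₂ + W = V) (hV0 : 0 ≤ V) (hfrac : T₁ + T₂ ≤ c * T₁)
    (hT' : ∀ κ > 0, T' ≤ (1 + κ) * T₂ + (1 + κ⁻¹) * (C₁ * ((V + t ^ 2) * V)))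
    (hW' : W' ≤ (1 - t) * W + C₂ * ((θ + V) * V)) :
    T' + W' ≤ (1 - t + ((1 + 2 * c) * C₁ + C₂) * (θ + V + t ^ 2)) * V := by
  have hc0 : 0 < c := by linarith
  have hκ : 0 < (2 * c)⁻¹ := by positivity
  have hT₁ : 2 * (2 * c)⁻¹ * (T₁ + T₂) ≤ T₁ := by
    rwa [mul_inv, mul_inv_cancel_left₀ two_ne_zero, inv_mul_le_iff₀ hc0]
  have htail : (1 + (2 * c)⁻¹) * T₂ ≤ (1 - t) * (T₁ + T₂) := calc
    (1 + (2 * c)⁻¹) * T₂ ≤ (1 + (2 * c)⁻¹) * ((1 - 2 * (2 * c)⁻¹) * (T₁ + T₂)) := by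
      gcongr
      linarith
    _ ≤ (1 - (2 * c)⁻¹) * (T₁ + T₂) := by
      linarith [mul_nonneg (sq_nonneg (2 * c)⁻¹) hT]
    _ ≤ (1 - t) * (T₁ + T₂) := by gcongr; exact ht.2
  have hT'κ := hT' _ hκ
  rw [inv_inv] at hT'κ
  have hθV : 0 ≤ (1 + 2 * c) * C₁ * (θ * V) := by positivity
  have htV : 0 ≤ C₂ * (t ^ 2 * V) := by positivity
  have hVt : (1 - t) * V = (1 - t) * (T₁ + T₂) + (1 - t) * W := by rw [← hV, mul_add]
  linarith

theorem exists_contraction_parameters {C κ : ℝ} (hC : 0 < C) (hκ : 0 < κ) :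
    ∃ t > 0, t ≤ κ ∧ t ≤ 1 ∧ ∃ θ > 0, θ ≤ 1 ∧ ∃ v > 0, ∀ V ≤ v,
      1 - t + C * (θ + V + t ^ 2) ≤ 1 - t / 2 := by
  refine ⟨min (min κ 1) (1 / 6 / C), by positivity, (min_le_left _ _).trans (min_le_left _ _),
    (min_le_left _ _).trans (min_le_right _ _), ?_⟩
  set t := min (min κ 1) (1 / 6 / C)
  have ht : 0 < t := by positivity
  have hCt : C * t ≤ 1 / 6 := (le_div_iff₀' hC).1 (min_le_right _ _)
  refine ⟨min 1 (t / 6 / C), by positivity, min_le_left _ _, t / 6 / C, by positivity,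
    fun V hV => ?_⟩
  have hCθ : C * min 1 (t / 6 / C) ≤ t / 6 := (le_div_iff₀' hC).1 (min_le_right _ _)
  have hCV : C * V ≤ t / 6 := (le_div_iff₀' hC).1 hV
  have hCt_sq : C * t ^ 2 ≤ t / 6 := by nlinarith
  linarith

variable {n m p N : ℕ} {f0 : (Fin n → ℝ) → Fin n → ℝ} {h0 : (Fin n → ℝ) → Fin p → ℝ}
  {B : Matrix (Fin n) (Fin m) ℝ} {D : Matrix (Fin p) (Fin m) ℝ} {U Us : Set (Fin m → ℝ)}
  {Q : Matrix (Fin n) (Fin n) ℝ} {R : Matrix (Fin m) (Fin m) ℝ} {S : Matrix (Fin p) (Fin p) ℝ}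
  {yr : Fin p → ℝ} {M₁ M₂ μ σs σl : ℝ} {𝓑 : Set ((Fin n → ℝ) × (Fin m → ℝ))}

theorem exists_successor_candidate {d : ℕ} {b c r : ℝ} (hUs : IsClosed Us)
    (hUsconv : Convex ℝ Us) (hr0 : 0 < r) (hr : ∀ u ∈ Us, ∀ v, ‖v‖ ≤ r → u + v ∈ U)
    (hQ : Q.PosDef) (hR : R.PosDef) (hS : S.PosDef)
    (hf : TaylorBoundOn f0 (Metric.closedBall 0 (b + c + 1)) M₁)
    (hh : TaylorBoundOn h0 (Metric.closedBall 0 (b + c + 1)) M₂)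
    (hσs : 0 < σs) (hA2 : A2holds f0 h0 B D σs) (hμ : 0 < μ) (hA3 : A3holds f0 B μ)
    (hσl : 0 < σl) (hA4 : A4holds f0 σl) (h𝓑 : IsCompact 𝓑)
    (hA5 : ∀ q : Fin n → ℝ, Zlin f0 B Us q ⊆ 𝓑) (hb : ∀ z ∈ 𝓑, ‖z‖ ≤ b) (hc : 0 < c) :
    ∃ C₁ > 0, ∃ C₂ > 0, ∃ δ₀ > 0, ∀ {q xb ub xs us} {δ θ t : ℝ}, δ ∈ Set.Icc 0 δ₀ →
      θ ∈ Set.Icc (0 : ℝ) 1 → t ∈ Set.Icc (0 : ℝ) 1 →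
      SteadyApproach f0 B Us (n + d) q xb ub xs us (c * δ) →
      steadyCost h0 D S yr q xs us - Jeqlin f0 h0 B D Us S yr q ≤ δ ^ 2 →
      steadyCost h0 D S yr q xs us ≤ θ ^ 2 →
      Jeqlin f0 h0 B D Us S yr (rollout f0 B q ub n) ≤ θ ^ 2 →
      ∃ xb' ub' xs' us', MPCfeas f0 h0 B D U Us (n + d) (rollout f0 B q ub n) xb' ub' xs' us'
          (hlin h0 D (rollout f0 B q ub n) xs' us') ∧
        (∀ κ > 0, trackingCost Q R (n + d) (fun k => xb' k - xs') (fun k => ub' k - us') ≤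
          (1 + κ) * trackingCost Q R d (fun k => xb (n + k) - xs) (fun k => ub (n + k) - us) +
            (1 + κ⁻¹) * (C₁ * ((δ ^ 2 + t ^ 2) * δ ^ 2))) ∧
        steadyCost h0 D S yr (rollout f0 B q ub n) xs' us' -
            Jeqlin f0 h0 B D Us S yr (rollout f0 B q ub n) ≤
          (1 - t) * (steadyCost h0 D S yr q xs us - Jeqlin f0 h0 B D Us S yr q) +
            C₂ * ((θ + δ ^ 2) * δ ^ 2) := by
  obtain ⟨Cr, hCr, δr, hδr, hroll⟩ := exists_rollout_bounds B Us (n + d) hc hf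
  obtain ⟨Ct, hCt, htarget⟩ := exists_steady_target (yr := yr) hUs hUsconv hS hf hh hσs
    hA2 hσl hA4 h𝓑 hA5 (c := c + Cr) (by positivity)
  obtain ⟨Cs, hCs, δs, hδs, hshift⟩ := exists_shifted_candidate (h0 := h0) (D := D) (d := d)
    (c := c + Cr + Ct) (by positivity) hμ hA3 hf hQ hR hr0 hr
  refine ⟨Cs, hCs, Ct, hCt, min 1 (min δr δs), by positivity,
    fun {q xb ub xs us δ θ t} ⟨hδ, hδ₀⟩ hθ ht happ hgap hcost hJ => ?_⟩
  simp only [le_min_iff] at hδ₀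
  obtain ⟨hδ1, hδr, hδs⟩ := hδ₀
  have hxs : ‖xs‖ ≤ b := (norm_fst_le (xs, us)).trans (hb _ (hA5 q happ.mem_Zlin))
  have hbounds := hroll hδ hδr hxs happ
  obtain ⟨hq', hpred, hqq⟩ := hbounds n (n.le_add_right d)
  have hq : q ∈ Metric.closedBall 0 (b + c + 1) := (hbounds 0 (Nat.zero_le _)).1
  obtain ⟨xs', us', hmem, hdist, hgap'⟩ := htarget q hq _ hq' xs us happ.mem_Zlin δ ⟨hδ, hδ1⟩ θ hθ
    t ht (hqq.trans (by gcongr; linarith))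
    ((norm_sub_rev q xs ▸ happ.norm_start_sub_le).trans (by gcongr; linarith)) hgap hcost hJ
  have htδ : 0 ≤ δ ^ 2 + t * δ := add_nonneg (sq_nonneg δ) (mul_nonneg ht.1 hδ)
  obtain ⟨xb', ub', hfeas, htrack⟩ := hshift q hq _ hq' hδ hδs ht
    (happ.mono (by gcongr; linarith)) (hqq.trans (by gcongr; linarith))
    (hpred.trans (by gcongr; linarith)) hmem (hdist.trans (by gcongr; linarith))
  exact ⟨xb', ub', xs', us', hfeas, htrack, hgap'⟩

theorem exists_Vfun_rollout_le (hN : n ≤ N) (hUs : IsCompact Us) (hUsconv : Convex ℝ Us)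
    (hUsint : Us ⊆ interior U) (hQ : Q.PosDef) (hR : R.PosDef) (hS : S.PosDef)
    (hf0 : ContDiff ℝ 2 f0) (hh0 : ContDiff ℝ 2 h0) (hσs : 0 < σs)
    (hA2 : A2holds f0 h0 B D σs) (hμ : 0 < μ) (hA3 : A3holds f0 B μ) (hσl : 0 < σl)
    (hA4 : A4holds f0 σl) (h𝓑 : IsCompact 𝓑) (hA5 : ∀ q : Fin n → ℝ, Zlin f0 B Us q ⊆ 𝓑) :
    ∃ C > 0, ∃ κ > 0, ∃ σ > 0, ∀ {xt xb ub xs us ys} {θ t : ℝ},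
      MPCopt f0 h0 B D U Us Q R S yr N xt xb ub xs us ys →
      Vfun f0 h0 B D U Us Q R S yr N xt ≤ σ → θ ∈ Set.Icc (0 : ℝ) 1 → t ∈ Set.Icc 0 κ →
      Vfun f0 h0 B D U Us Q R S yr N xt + Jeqlin f0 h0 B D Us S yr xt ≤ θ ^ 2 →
      Jeqlin f0 h0 B D Us S yr (rollout f0 B xt ub n) ≤ θ ^ 2 →
      MPCfeasible f0 h0 B D U Us N (rollout f0 B xt ub n) ∧
      Vfun f0 h0 B D U Us Q R S yr N (rollout f0 B xt ub n) ≤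
        (1 - t + C * (θ + Vfun f0 h0 B D U Us Q R S yr N xt + t ^ 2)) *
          Vfun f0 h0 B D U Us Q R S yr N xt := by
  obtain ⟨d, rfl⟩ := Nat.exists_eq_add_of_le hN
  obtain ⟨r, hr0, hr⟩ := exists_add_mem_of_subset_interior hUs hUsint
  obtain ⟨b, -, hb⟩ := h𝓑.isBounded.exists_pos_norm_le
  obtain ⟨c, hc, happroach⟩ := exists_steadyApproach_of_MPCopt (f0 := f0) (h0 := h0) (B := B)
    (D := D) (U := U) (Us := Us) (N := n + d) (yr := yr) hQ hR hS
  have hball := isCompact_closedBall (0 : Fin n → ℝ) (b + c + 1)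
  obtain ⟨M₁, hf⟩ := exists_taylorBoundOn hf0 hball (convex_closedBall _ _)
  obtain ⟨M₂, hh⟩ := exists_taylorBoundOn hh0 hball (convex_closedBall _ _)
  obtain ⟨C₁, hC₁, C₂, hC₂, δ₀, hδ₀, hcand⟩ := exists_successor_candidate (d := d) (yr := yr)
    hUs.isClosed hUsconv hr0 hr hQ hR hS hf hh hσs hA2 hμ hA3 hσl hA4 h𝓑 hA5 hb hc
  obtain ⟨a, ha, ρ, hρ, hfrac⟩ := exists_trackingCost_le_mul_of_MPCopt (h0 := h0) (D := D)
    (S := S) (yr := yr) hN hμ hA3 hf.nonneg hQ hR hr0 hr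
  have : 0 < a := zero_lt_one.trans_le ha
  refine ⟨(1 + 2 * a) * C₁ + C₂, by positivity, (2 * a)⁻¹, by positivity,
    (min (min 1 δ₀) (ρ / c)) ^ 2, by positivity,
    fun {xt xb ub xs us ys θ t} hopt hσ hθ ht hVJ hJ => ?_⟩
  have hV0 := Vfun_nonneg_of_MPCopt hQ hR hS hopt
  have hVeq := Vfun_eq_of_MPCopt hopt
  set V := Vfun f0 h0 B D U Us Q R S yr (n + d) xt
  obtain ⟨δ, hδ, hδV⟩ : ∃ δ, 0 ≤ δ ∧ δ ^ 2 = V := ⟨√V, Real.sqrt_nonneg _, Real.sq_sqrt hV0⟩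
  have hδmin : δ ≤ min (min 1 δ₀) (ρ / c) := le_of_sq_le_sq (hδV ▸ hσ) (by positivity)
  simp only [le_min_iff] at hδmin
  obtain ⟨⟨hδ1, hδδ₀⟩, hδρ⟩ := hδmin
  obtain ⟨happ, hgap⟩ := happroach hδ hopt hδV.ge
  have hxs : ‖xs‖ ≤ b := (norm_fst_le (xs, us)).trans (hb _ (hA5 xt happ.mem_Zlin))
  have hxt : xt ∈ Metric.closedBall 0 (b + c + 1) := mem_closedBall_zero_iff.2
    (by linarith [happ.norm_start_le, mul_le_of_le_one_right hc.le hδ1])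
  have ht1 : t ≤ 1 := ht.2.trans (inv_le_one_of_one_le₀ (by linarith))
  obtain ⟨xb', ub', xs', us', hfeas, htrack, hgap'⟩ := hcand ⟨hδ, hδδ₀⟩ hθ ⟨ht.1, ht1⟩ happ hgap
    (by linarith) hJ
  have hfirst := hfrac (hf.norm_fderiv_le xt hxt) hopt
    (happ.norm_start_sub_le.trans ((le_div_iff₀' hc).1 hδρ))
  have htotal := trackingCost_nonneg hQ hR (n + d) (fun k => xb k - xs) fun k => ub k - us
  rw [trackingCost_add_steps] at hfirst htotal hVeq
  rw [hδV] at htrack hgap'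
  exact ⟨⟨_, _, _, _, _, hfeas⟩, (Vfun_le_of_MPCfeas hQ hR hS hfeas).trans
    (add_le_mul_of_le_mul ha ht hθ.1 hC₁.le hC₂.le htotal hVeq.symm hV0 hfirst htrack hgap')⟩

end Contraction

theorem stmt1_general {n m p : ℕ} (N : ℕ) (hN : n ≤ N)
    (f0 : (Fin n → ℝ) → Fin n → ℝ) (h0 : (Fin n → ℝ) → Fin p → ℝ)
    (B : Matrix (Fin n) (Fin m) ℝ) (D : Matrix (Fin p) (Fin m) ℝ)
    (U Us : Set (Fin m → ℝ)) (yr : Fin p → ℝ)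
    (Q : Matrix (Fin n) (Fin n) ℝ) (R : Matrix (Fin m) (Fin m) ℝ)
    (S : Matrix (Fin p) (Fin p) ℝ)
    (hUs : IsCompact Us) (hUsconv : Convex ℝ Us) (hUsint : Us ⊆ interior U)
    (hQ : Q.PosDef) (hR : R.PosDef) (hS : S.PosDef)
    (hf0 : ContDiff ℝ 2 f0) (hh0 : ContDiff ℝ 2 h0)
    (σs : ℝ) (hσs : 0 < σs) (hA2 : A2holds f0 h0 B D σs)
    (μ : ℝ) (hμ : 0 < μ) (hA3 : A3holds f0 B μ)
    (σl : ℝ) (hσl : 0 < σl) (hA4 : A4holds f0 σl)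
    (𝓑 : Set ((Fin n → ℝ) × (Fin m → ℝ))) (h𝓑 : IsCompact 𝓑)
    (hA5 : ∀ xt : Fin n → ℝ, Zlin f0 B Us xt ⊆ 𝓑) :
    ∃ Vmax Jeqmax cV : ℝ, 0 < Vmax ∧ 0 < Jeqmax ∧ 0 < cV ∧ cV < 1 ∧
      ∀ xt : Fin n → ℝ,
        Vfun f0 h0 B D U Us Q R S yr N xt ≤ Vmax →
        Jeqlin f0 h0 B D Us S yr xt ≤ Jeqmax →
        ∀ (xb : ℕ → Fin n → ℝ) (ub : ℕ → Fin m → ℝ) (xs : Fin n → ℝ)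
          (us : Fin m → ℝ) (ys : Fin p → ℝ),
          MPCopt f0 h0 B D U Us Q R S yr N xt xb ub xs us ys →
          Jeqlin f0 h0 B D Us S yr (rollout f0 B xt ub n) ≤ Jeqmax →
          MPCfeasible f0 h0 B D U Us N (rollout f0 B xt ub n) ∧
          Vfun f0 h0 B D U Us Q R S yr N (rollout f0 B xt ub n) ≤
            cV * Vfun f0 h0 B D U Us Q R S yr N xt := by
  obtain ⟨C, hC, κ, hκ, σ, hσ, hdecrease⟩ := exists_Vfun_rollout_le (yr := yr) hN hUs hUsconv
    hUsint hQ hR hS hf0 hh0 hσs hA2 hμ hA3 hσl hA4 h𝓑 hA5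
  obtain ⟨t, ht, htκ, ht1, θ, hθ, hθ1, v, hv, hrate⟩ := exists_contraction_parameters hC hκ
  refine ⟨min (min σ v) (θ ^ 2 / 2), θ ^ 2 / 2, 1 - t / 2, by positivity, by positivity,
    by linarith, by linarith, fun xt hV hJ xb ub xs us ys hopt hJ' => ?_⟩
  simp only [le_min_iff] at hV
  obtain ⟨⟨hVσ, hVv⟩, hVθ⟩ := hV
  obtain ⟨hfeas, hle⟩ := hdecrease hopt hVσ ⟨hθ.le, hθ1⟩ ⟨ht.le, htκ⟩ (by linarith)
    (by linarith [sq_nonneg θ])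
  exact ⟨hfeas, hle.trans
    (mul_le_mul_of_nonneg_right (hrate _ hVv) (Vfun_nonneg_of_MPCopt hQ hR hS hopt))⟩

/-- Proposition 2: contraction of the Lyapunov function candidate
`V = J*_N − J*_{eq,lin}` over `n` steps of the closed loop. There exist
`V_max, J_eq^max > 0` and `c_V ∈ (0,1)` such that whenever the tracking MPC
problem is feasible at `x_t` with `V(x_t) ≤ V_max`, `J*_{eq,lin}(x_t) ≤ J_eq^max`,
and the state `x_{t+n}` obtained by applying the first `n` optimal inputs to the
nonlinear dynamics satisfies `J*_{eq,lin}(x_{t+n}) ≤ J_eq^max`, the problem is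
feasible at `x_{t+n}` and `V(x_{t+n}) ≤ c_V V(x_t)`. -/
theorem stmt1 {n m p : ℕ} (N : ℕ) (hN : n ≤ N)
    (f0 : (Fin n → ℝ) → Fin n → ℝ) (h0 : (Fin n → ℝ) → Fin p → ℝ)
    (B : Matrix (Fin n) (Fin m) ℝ) (D : Matrix (Fin p) (Fin m) ℝ)
    (U Us : Set (Fin m → ℝ)) (yr : Fin p → ℝ)
    (Q : Matrix (Fin n) (Fin n) ℝ) (R : Matrix (Fin m) (Fin m) ℝ)
    (S : Matrix (Fin p) (Fin p) ℝ)
    (hU : IsCompact U) (hUs : IsCompact Us) (hUsconv : Convex ℝ Us)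
    (hUsint : Us ⊆ interior U)
    (hQ : Q.PosDef) (hR : R.PosDef) (hS : S.PosDef)
    -- (A1)
    (hf0 : ContDiff ℝ 2 f0) (hh0 : ContDiff ℝ 2 h0)
    -- (A2)
    (σs : ℝ) (hσs : 0 < σs) (hA2 : A2holds f0 h0 B D σs)
    -- (A3)
    (μ : ℝ) (hμ : 0 < μ) (hA3 : A3holds f0 B μ)
    -- (A4)
    (σl : ℝ) (hσl : 0 < σl) (hA4 : A4holds f0 σl)
    -- (A5)
    (𝓑 : Set ((Fin n → ℝ) × (Fin m → ℝ))) (h𝓑 : IsCompact 𝓑)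
    (hA5 : ∀ xt : Fin n → ℝ, Zlin f0 B Us xt ⊆ 𝓑) :
    ∃ Vmax Jeqmax cV : ℝ, 0 < Vmax ∧ 0 < Jeqmax ∧ 0 < cV ∧ cV < 1 ∧
      ∀ xt : Fin n → ℝ,
        MPCfeasible f0 h0 B D U Us N xt →
        Vfun f0 h0 B D U Us Q R S yr N xt ≤ Vmax →
        Jeqlin f0 h0 B D Us S yr xt ≤ Jeqmax →
        ∀ (xb : ℕ → Fin n → ℝ) (ub : ℕ → Fin m → ℝ) (xs : Fin n → ℝ)
          (us : Fin m → ℝ) (ys : Fin p → ℝ),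
          MPCopt f0 h0 B D U Us Q R S yr N xt xb ub xs us ys →
          Jeqlin f0 h0 B D Us S yr (rollout f0 B xt ub n) ≤ Jeqmax →
          MPCfeasible f0 h0 B D U Us N (rollout f0 B xt ub n) ∧
          Vfun f0 h0 B D U Us Q R S yr N (rollout f0 B xt ub n) ≤
            cV * Vfun f0 h0 B D U Us Q R S yr N xt := by
  obtain ⟨Vmax, Jeqmax, cV, hV, hJ, hc, hc1, h⟩ := stmt1_general N hN f0 h0 B D U Us yr Q R S hUs
    hUsconv hUsint hQ hR hS hf0 hh0 σs hσs hA2 μ hμ hA3 σl hσl hA4 𝓑 h𝓑 hA5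
  exact ⟨Vmax, Jeqmax, cV, hV, hJ, hc, hc1, fun xt _ => h xt⟩
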